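/- Let K be a field, t ∈ K^×, κ ∈ Z^ℓ a multicharge, e ∈ {0,2,3,4,…}, and suppose (K,t) separates Std(P_n). If i ∈ I^n and 1 ≤ r < n satisfy i_r ≠ i_{r+1}, and j = s_r·i is i with its r-th and (r+1)-st entries swapped, then (T_r L_r − L_r T_r) f_i = f_j (T_r L_r − L_r T_r) in H_n(K,t,κ), where f_i and f_j are residue idempotents. -/

import Mathlib

open scoped BigOperators
open scoped Classical

namespace Paper

/-! ## Quantum integers -/

/-- The quantum integer `[d]_x` in a field, for `d ∈ ℤ`. -/
noncomputable def qint {K : Type*} [Field K] (x : K) (d : ℤ) : K :=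
  if 0 ≤ d then ∑ k ∈ Finset.range d.toNat, x ^ k
  else -∑ k ∈ Finset.range (-d).toNat, x ^ (-((k : ℤ) + 1))

/-- The quantum integer `[d]_t` in a commutative ring, for an invertible `t` and `d ∈ ℤ`. -/
def qintU {O : Type*} [CommRing O] (t : Oˣ) (d : ℤ) : O :=
  if 0 ≤ d then ∑ k ∈ Finset.range d.toNat, (t : O) ^ k
  else -∑ k ∈ Finset.range (-d).toNat, ((t ^ (-((k : ℤ) + 1)) : Oˣ) : O)

/-! ## Nodes, multipartitions and standard tableaux -/

/-- A node `(l, r, c)`: component `l`, row `r`, column `c` (all `0`-based). -/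
abbrev Node : Type := ℕ × ℕ × ℕ

/-- `nodeBelow A B` holds when `B` is strictly below `A`, i.e. `A < B` lexicographically. -/
def nodeBelow (A B : Node) : Prop :=
  A.1 < B.1 ∨ (A.1 = B.1 ∧ (A.2.1 < B.2.1 ∨ (A.2.1 = B.2.1 ∧ A.2.2 < B.2.2)))

/-- An `ℓ`-multipartition of `n`. -/
structure Multipartition (ℓ n : ℕ) : Type where
  part : ℕ → ℕ → ℕ
  comp_bound : ∀ l, ℓ ≤ l → ∀ r, part l r = 0
  antitone : ∀ l, Antitone (part l)
  row_bound : ∀ l r, n ≤ r → part l r = 0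
  size : (∑ l ∈ Finset.range ℓ, ∑ r ∈ Finset.range n, part l r) = n

/-- The diagram of a multipartition. -/
def Multipartition.diagram {ℓ n : ℕ} (μ : Multipartition ℓ n) : Set Node :=
  {A | A.2.2 < μ.part A.1 A.2.1}

/-- A standard tableau: a bijection from the diagram of its shape onto `{1, …, n}`
that increases along rows and down columns of each component (it takes the value
`0` off the diagram, so that it is determined by its entries). -/
structure StdTableau (ℓ n : ℕ) : Type where
  shape : Multipartition ℓ n
  entry : Node → ℕ
  entry_zero : ∀ A, A ∉ shape.diagram → entry A = 0
  bijOn : Set.BijOn entry shape.diagram (Set.Icc 1 n)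
  row_inc : ∀ l r c, (l, r, c + 1) ∈ shape.diagram → entry (l, r, c) < entry (l, r, c + 1)
  col_inc : ∀ l r c, (l, r + 1, c) ∈ shape.diagram → entry (l, r, c) < entry (l, r + 1, c)

/-- The node of a standard tableau containing the entry `k`. -/
noncomputable def StdTableau.node {ℓ n : ℕ} (T : StdTableau ℓ n) (k : ℕ) : Node :=
  Function.invFunOn T.entry T.shape.diagram k

/-- The content `c_k(T) = κ_l + c - r` of the entry `k` in the tableau `T`
(`1 ≤ k ≤ n`). -/
noncomputable def content {ℓ n : ℕ} (κ : ℕ → ℤ) (T : StdTableau ℓ n) (k : ℕ) : ℤ :=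
  κ (T.node k).1 + ((T.node k).2.2 : ℤ) - ((T.node k).2.1 : ℤ)

/-- The residue sequence of a standard tableau, in `I^n` with `I = ℤ/eℤ`. -/
noncomputable def resSeq {ℓ n : ℕ} (e : ℕ) (κ : ℕ → ℤ) (T : StdTableau ℓ n) :
    Fin n → ZMod e :=
  fun k => ((content κ T (k.1 + 1) : ℤ) : ZMod e)

/-- The residue of a node. -/
def resNode (e : ℕ) (κ : ℕ → ℤ) (A : Node) : ZMod e :=
  ((κ A.1 + (A.2.2 : ℤ) - (A.2.1 : ℤ) : ℤ) : ZMod e)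

/-- A set of nodes is the diagram of a multipartition (with at most `ℓ` components)
iff it is finite and downward closed in rows and columns. -/
def IsDiagramSet (ℓ : ℕ) (S : Set Node) : Prop :=
  S.Finite ∧ (∀ A ∈ S, A.1 < ℓ) ∧
    (∀ l r c, (l, r, c + 1) ∈ S → (l, r, c) ∈ S) ∧
    (∀ l r c, (l, r + 1, c) ∈ S → (l, r, c) ∈ S)

/-- `A` is an addable node of the diagram `S`. -/
def Addable (ℓ : ℕ) (S : Set Node) (A : Node) : Prop :=
  A ∉ S ∧ IsDiagramSet ℓ (S ∪ {A})

/-- `A` is a removable node of the diagram `S`. -/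
def Removable (ℓ : ℕ) (S : Set Node) (A : Node) : Prop :=
  A ∈ S ∧ IsDiagramSet ℓ (S \ {A})

/-- `d_A(S)`: the number of addable nodes of `S` of the same residue as `A` strictly
below `A`, minus the number of removable ones. -/
noncomputable def dNode (ℓ e : ℕ) (κ : ℕ → ℤ) (S : Set Node) (A : Node) : ℤ :=
  (Set.ncard {B | Addable ℓ S B ∧ resNode e κ B = resNode e κ A ∧ nodeBelow A B} : ℤ) -
    (Set.ncard {B | Removable ℓ S B ∧ resNode e κ B = resNode e κ A ∧ nodeBelow A B} : ℤ)

/-- The Brundan–Kleshchev–Wang degree `deg_e(T)` of a standard tableau, written as the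
telescoping sum of the recursion `deg_e(T) = deg_e(T↓(n-1)) + d_A(Shape(T))`. -/
noncomputable def degE {ℓ n : ℕ} (e : ℕ) (κ : ℕ → ℤ) (T : StdTableau ℓ n) : ℤ :=
  ∑ m ∈ Finset.Icc 1 n,
    dNode ℓ e κ {A | A ∈ T.shape.diagram ∧ T.entry A ≤ m} (T.node m)

/-- The restriction of the diagram of `T` to entries `≤ m` (the diagram of `Shape(T↓m)`). -/
def restDiag {ℓ n : ℕ} (T : StdTableau ℓ n) (m : ℕ) : Set Node :=
  {A | A ∈ T.shape.diagram ∧ T.entry A ≤ m}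

/-- Dominance order on standard tableaux: `domTab S T` iff `S ⊵ T`. -/
def domTab {ℓ n : ℕ} (S T : StdTableau ℓ n) : Prop :=
  ∀ m l i : ℕ,
    Set.ncard {A | A ∈ restDiag T m ∧ (A.1 < l ∨ (A.1 = l ∧ A.2.1 ≤ i))} ≤
      Set.ncard {A | A ∈ restDiag S m ∧ (A.1 < l ∨ (A.1 = l ∧ A.2.1 ≤ i))}

/-- Interchange the entries `r` and `r + 1` in an entry function. -/
def swapEntry (f : Node → ℕ) (r : ℕ) : Node → ℕ :=
  fun A => if f A = r then r + 1 else if f A = r + 1 then r else f A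

/-- `ρ_r(T) = c_r(T) - c_{r+1}(T)`, the axial distance. -/
noncomputable def rhoTab {ℓ n : ℕ} (κ : ℕ → ℤ) (T : StdTableau ℓ n) (r : ℕ) : ℤ :=
  content κ T r - content κ T (r + 1)

/-- The entry function of the row-reading initial tableau `t^λ`. -/
noncomputable def tlamEntry {ℓ n : ℕ} (μ : Multipartition ℓ n) (A : Node) : ℕ :=
  if A ∈ μ.diagram then
    (∑ l ∈ Finset.range A.1, ∑ r ∈ Finset.range n, μ.part l r) +
      (∑ r ∈ Finset.range A.2.1, μ.part A.1 r) + A.2.2 + 1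
  else 0

/-- The finite set of possible contents of standard tableaux of size `n`. -/
noncomputable def contFinset (ℓ n : ℕ) (κ : ℕ → ℤ) : Finset ℤ :=
  ((Finset.range ℓ ×ˢ Finset.range n ×ˢ Finset.range n).image
      (fun x => κ x.1 + (x.2.2 : ℤ) - (x.2.1 : ℤ))).filter
    (fun c => ∃ T : StdTableau ℓ n, ∃ k, 1 ≤ k ∧ k ≤ n ∧ content κ T k = c)

/-- The standard tableau (if any) obtained from `T` by interchanging the entries
`r` and `r + 1`; i.e. `T·s_r` if it is standard, and `none` otherwise. -/
noncomputable def oSwapO {ℓ n : ℕ} (T : StdTableau ℓ n) (r : ℕ) :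
    Option (StdTableau ℓ n) :=
  if h : ∃ V : StdTableau ℓ n, V.entry = swapEntry T.entry r then some (Classical.choose h)
  else none

/-- `oSwap` extended to `Option`. -/
noncomputable def oSwap {ℓ n : ℕ} (X : Option (StdTableau ℓ n)) (r : ℕ) :
    Option (StdTableau ℓ n) :=
  X.bind fun T => oSwapO T r

/-- Evaluate a seminormal coefficient system on an optional tableau (by `0` if none). -/
noncomputable def aE {ℓ n : ℕ} {K : Type*} [Field K] (α : ℕ → StdTableau ℓ n → K) (r : ℕ)
    (X : Option (StdTableau ℓ n)) : K :=
  X.elim 0 (α r)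

/-! ## Separation and idempotent subrings -/

/-- `(K, t)` separates `Std(P_n)` (field version):
`[n]!_t ∏_{1 ≤ l < m ≤ ℓ} ∏_{-n < d < n} [κ_l - κ_m + d]_t ≠ 0`. -/
def SeparatesF {K : Type*} [Field K] (t : Kˣ) (n ℓ : ℕ) (κ : ℕ → ℤ) : Prop :=
  ((∏ d ∈ Finset.Icc 1 n, qint (t : K) (d : ℤ)) *
      ∏ l ∈ Finset.range ℓ, ∏ m ∈ Finset.Ioo l ℓ,
        ∏ d ∈ Finset.Ioo (-(n : ℤ)) (n : ℤ), qint (t : K) (κ l - κ m + d)) ≠ 0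

/-- `(O, t)` separates `Std(P_n)` (subring version): the separation element is a unit. -/
def SeparatesU {O : Type*} [CommRing O] (t : Oˣ) (n ℓ : ℕ) (κ : ℕ → ℤ) : Prop :=
  IsUnit ((∏ d ∈ Finset.Icc 1 n, qintU t (d : ℤ)) *
      ∏ l ∈ Finset.range ℓ, ∏ m ∈ Finset.Ioo l ℓ,
        ∏ d ∈ Finset.Ioo (-(n : ℤ)) (n : ℤ), qintU t (κ l - κ m + d))

/-- `(O, t)` is an `e`-idempotent subring of the field `K`. -/
def IsIdempotentSubring {K : Type*} [Field K] (O : Subring K) (t : Oˣ) (e n ℓ : ℕ)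
    (κ : ℕ → ℤ) : Prop :=
  SeparatesU t n ℓ κ ∧
    (∀ k : ℤ, ¬(e : ℤ) ∣ k → IsUnit (qintU t k)) ∧
    (∀ k : ℤ, (e : ℤ) ∣ k → qintU t k ∈ Ideal.jacobson (⊥ : Ideal O))

/-! ## The cyclotomic Hecke algebra, by generators and relations -/

/-- Generators `L_1, …, L_n`, `T_1, …, T_{n-1}` (here `0`-based). -/
inductive HeckeGen (n : ℕ) : Type
  | L : Fin n → HeckeGen n
  | T : Fin (n - 1) → HeckeGen n

/-- The position `r` of the pair `(r, r+1)` interchanged by the `r`-th transposition. -/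
def pL {n : ℕ} (r : Fin (n - 1)) : Fin n := ⟨r.1, by have := r.2; omega⟩

/-- The position `r + 1` of the pair interchanged by the `r`-th transposition. -/
def pR {n : ℕ} (r : Fin (n - 1)) : Fin n := ⟨r.1 + 1, by have := r.2; omega⟩

/-- The position `r + 2`, used in braid relations. -/
def pM {n : ℕ} (r : Fin (n - 1)) (hr : r.1 + 1 < n - 1) : Fin n := ⟨r.1 + 2, by omega⟩

/-- The free algebra generator `L_k`. -/
def hL (R : Type*) [CommRing R] {n : ℕ} (k : Fin n) : FreeAlgebra R (HeckeGen n) :=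
  FreeAlgebra.ι R (HeckeGen.L k)

/-- The free algebra generator `T_r`. -/
def hT (R : Type*) [CommRing R] {n : ℕ} (r : Fin (n - 1)) : FreeAlgebra R (HeckeGen n) :=
  FreeAlgebra.ι R (HeckeGen.T r)

/-- The defining relations of the integral cyclotomic Hecke algebra `H_n(R, t, κ)`. -/
inductive HeckeRel (R : Type*) [CommRing R] (t : Rˣ) (n ℓ : ℕ) (κ : ℕ → ℤ) :
    FreeAlgebra R (HeckeGen n) → FreeAlgebra R (HeckeGen n) → Prop
  | cyc (h : 0 < n) :
      HeckeRel R t n ℓ κ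
        (((List.range ℓ).map fun l =>
          hL R (⟨0, h⟩ : Fin n) - algebraMap R _ (qintU t (κ l))).prod) 0
  | quad (r : Fin (n - 1)) :
      HeckeRel R t n ℓ κ ((hT R r + 1) * (hT R r - algebraMap R _ (t : R))) 0
  | LL (k m : Fin n) : HeckeRel R t n ℓ κ (hL R k * hL R m) (hL R m * hL R k)
  | TTfar (r s : Fin (n - 1)) (h : r.1 + 1 < s.1 ∨ s.1 + 1 < r.1) :
      HeckeRel R t n ℓ κ (hT R r * hT R s) (hT R s * hT R r)
  | braid (r s : Fin (n - 1)) (h : s.1 = r.1 + 1) :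
      HeckeRel R t n ℓ κ (hT R r * hT R s * hT R r) (hT R s * hT R r * hT R s)
  | TL (r : Fin (n - 1)) (k : Fin n) (h : k.1 ≠ r.1 ∧ k.1 ≠ r.1 + 1) :
      HeckeRel R t n ℓ κ (hT R r * hL R k) (hL R k * hT R r)
  | LT (r : Fin (n - 1)) :
      HeckeRel R t n ℓ κ (hL R (pR r) * (hT R r - algebraMap R _ (t : R) + 1))
        (hT R r * hL R (pL r) + 1)

/-- The integral cyclotomic Hecke algebra of type `A`, `H_n(R, t, κ)`. -/
noncomputable abbrev CycHecke (R : Type*) [CommRing R] (t : Rˣ) (n ℓ : ℕ) (κ : ℕ → ℤ) :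
    Type _ :=
  RingQuot (HeckeRel R t n ℓ κ)

/-- The generator `L_k` of the cyclotomic Hecke algebra. -/
noncomputable def Lgen (R : Type*) [CommRing R] (t : Rˣ) (n ℓ : ℕ) (κ : ℕ → ℤ)
    (k : Fin n) : CycHecke R t n ℓ κ :=
  RingQuot.mkAlgHom R (HeckeRel R t n ℓ κ) (hL R k)

/-- The generator `T_r` of the cyclotomic Hecke algebra. -/
noncomputable def Tgen (R : Type*) [CommRing R] (t : Rˣ) (n ℓ : ℕ) (κ : ℕ → ℤ)
    (r : Fin (n - 1)) : CycHecke R t n ℓ κ :=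
  RingQuot.mkAlgHom R (HeckeRel R t n ℓ κ) (hT R r)

end Paper
/-! ## Quiver Hecke (KLR) algebras, by generators and relations -/

namespace Paper

/-- Generators `e(i)` (`i ∈ I^n`), `ψ_1, …, ψ_{n-1}`, `y_1, …, y_n` (here `0`-based). -/
inductive KLRGen (n e : ℕ) : Type
  | idem : (Fin n → ZMod e) → KLRGen n e
  | psi : Fin (n - 1) → KLRGen n e
  | y : Fin n → KLRGen n e

/-- The free algebra generator `e(i)`. -/
def kE (R : Type*) [CommRing R] {n e : ℕ} (i : Fin n → ZMod e) :
    FreeAlgebra R (KLRGen n e) :=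
  FreeAlgebra.ι R (KLRGen.idem i)

/-- The free algebra generator `ψ_r`. -/
def kPsi (R : Type*) [CommRing R] {n e : ℕ} (r : Fin (n - 1)) :
    FreeAlgebra R (KLRGen n e) :=
  FreeAlgebra.ι R (KLRGen.psi r)

/-- The free algebra generator `y_k`. -/
def kY (R : Type*) [CommRing R] {n e : ℕ} (k : Fin n) : FreeAlgebra R (KLRGen n e) :=
  FreeAlgebra.ι R (KLRGen.y k)

/-- `s_r · i`: interchange the entries of `i` at positions `r` and `r + 1`. -/
def swapSeq {n e : ℕ} (i : Fin n → ZMod e) (r : Fin (n - 1)) : Fin n → ZMod e :=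
  fun k => if k = pL r then i (pR r) else if k = pR r then i (pL r) else i k

/-- The defining relations of the cyclotomic quiver Hecke algebra `R_n^Λ(R)` where
`Λ = Σ_l Λ_{κ_l mod e}`. -/
inductive KLRRel (R : Type*) [CommRing R] (n e ℓ : ℕ) [NeZero e] (κ : ℕ → ℤ) :
    FreeAlgebra R (KLRGen n e) → FreeAlgebra R (KLRGen n e) → Prop
  | cyc (h : 0 < n) (i : Fin n → ZMod e) :
      KLRRel R n e ℓ κ
        ((kY R (⟨0, h⟩ : Fin n)) ^
            (((Finset.range ℓ).filter fun l => ((κ l : ZMod e) = i ⟨0, h⟩)).card) *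
          kE R i) 0
  | orth (i j : Fin n → ZMod e) (h : i ≠ j) : KLRRel R n e ℓ κ (kE R i * kE R j) 0
  | idem (i : Fin n → ZMod e) : KLRRel R n e ℓ κ (kE R i * kE R i) (kE R i)
  | complete : KLRRel R n e ℓ κ (∑ i : Fin n → ZMod e, kE R i) 1
  | yE (k : Fin n) (i : Fin n → ZMod e) :
      KLRRel R n e ℓ κ (kY R k * kE R i) (kE R i * kY R k)
  | psiE (r : Fin (n - 1)) (i : Fin n → ZMod e) :
      KLRRel R n e ℓ κ (kPsi R r * kE R i) (kE R (swapSeq i r) * kPsi R r)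
  | yy (k m : Fin n) : KLRRel R n e ℓ κ (kY R k * kY R m) (kY R m * kY R k)
  | psiyEq (r : Fin (n - 1)) (i : Fin n → ZMod e) (h : i (pL r) = i (pR r)) :
      KLRRel R n e ℓ κ (kPsi R r * kY R (pR r) * kE R i)
        ((kY R (pL r) * kPsi R r + 1) * kE R i)
  | psiyNe (r : Fin (n - 1)) (i : Fin n → ZMod e) (h : i (pL r) ≠ i (pR r)) :
      KLRRel R n e ℓ κ (kPsi R r * kY R (pR r) * kE R i)
        (kY R (pL r) * kPsi R r * kE R i)
  | ypsiEq (r : Fin (n - 1)) (i : Fin n → ZMod e) (h : i (pL r) = i (pR r)) :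
      KLRRel R n e ℓ κ (kY R (pR r) * kPsi R r * kE R i)
        ((kPsi R r * kY R (pL r) + 1) * kE R i)
  | ypsiNe (r : Fin (n - 1)) (i : Fin n → ZMod e) (h : i (pL r) ≠ i (pR r)) :
      KLRRel R n e ℓ κ (kY R (pR r) * kPsi R r * kE R i)
        (kPsi R r * kY R (pL r) * kE R i)
  | psiyFar (r : Fin (n - 1)) (k : Fin n) (h : k.1 ≠ r.1 ∧ k.1 ≠ r.1 + 1) :
      KLRRel R n e ℓ κ (kPsi R r * kY R k) (kY R k * kPsi R r)
  | psipsiFar (r s : Fin (n - 1)) (h : r.1 + 1 < s.1 ∨ s.1 + 1 < r.1) :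
      KLRRel R n e ℓ κ (kPsi R r * kPsi R s) (kPsi R s * kPsi R r)
  | quadEq (r : Fin (n - 1)) (i : Fin n → ZMod e) (h : i (pL r) = i (pR r)) :
      KLRRel R n e ℓ κ (kPsi R r ^ 2 * kE R i) 0
  | quadR (r : Fin (n - 1)) (i : Fin n → ZMod e)
      (h1 : i (pR r) = i (pL r) + 1) (h2 : i (pL r) ≠ i (pR r) + 1) :
      KLRRel R n e ℓ κ (kPsi R r ^ 2 * kE R i) ((kY R (pL r) - kY R (pR r)) * kE R i)
  | quadL (r : Fin (n - 1)) (i : Fin n → ZMod e)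
      (h1 : i (pL r) = i (pR r) + 1) (h2 : i (pR r) ≠ i (pL r) + 1) :
      KLRRel R n e ℓ κ (kPsi R r ^ 2 * kE R i) ((kY R (pR r) - kY R (pL r)) * kE R i)
  | quadBoth (r : Fin (n - 1)) (i : Fin n → ZMod e)
      (h1 : i (pR r) = i (pL r) + 1) (h2 : i (pL r) = i (pR r) + 1) :
      KLRRel R n e ℓ κ (kPsi R r ^ 2 * kE R i)
        ((kY R (pR r) - kY R (pL r)) * (kY R (pL r) - kY R (pR r)) * kE R i)
  | quadNone (r : Fin (n - 1)) (i : Fin n → ZMod e) (h1 : i (pL r) ≠ i (pR r))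
      (h2 : i (pR r) ≠ i (pL r) + 1) (h3 : i (pL r) ≠ i (pR r) + 1) :
      KLRRel R n e ℓ κ (kPsi R r ^ 2 * kE R i) (kE R i)
  | braidR (r : Fin (n - 1)) (hr : r.1 + 1 < n - 1) (i : Fin n → ZMod e)
      (h0 : i (pM r hr) = i (pL r)) (h1 : i (pR r) = i (pL r) + 1)
      (h2 : i (pL r) ≠ i (pR r) + 1) :
      KLRRel R n e ℓ κ (kPsi R r * kPsi R ⟨r.1 + 1, hr⟩ * kPsi R r * kE R i)
        ((kPsi R ⟨r.1 + 1, hr⟩ * kPsi R r * kPsi R ⟨r.1 + 1, hr⟩ - 1) * kE R i)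
  | braidL (r : Fin (n - 1)) (hr : r.1 + 1 < n - 1) (i : Fin n → ZMod e)
      (h0 : i (pM r hr) = i (pL r)) (h1 : i (pL r) = i (pR r) + 1)
      (h2 : i (pR r) ≠ i (pL r) + 1) :
      KLRRel R n e ℓ κ (kPsi R r * kPsi R ⟨r.1 + 1, hr⟩ * kPsi R r * kE R i)
        ((kPsi R ⟨r.1 + 1, hr⟩ * kPsi R r * kPsi R ⟨r.1 + 1, hr⟩ + 1) * kE R i)
  | braidBoth (r : Fin (n - 1)) (hr : r.1 + 1 < n - 1) (i : Fin n → ZMod e)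
      (h0 : i (pM r hr) = i (pL r)) (h1 : i (pR r) = i (pL r) + 1)
      (h2 : i (pL r) = i (pR r) + 1) :
      KLRRel R n e ℓ κ (kPsi R r * kPsi R ⟨r.1 + 1, hr⟩ * kPsi R r * kE R i)
        ((kPsi R ⟨r.1 + 1, hr⟩ * kPsi R r * kPsi R ⟨r.1 + 1, hr⟩ +
            kY R (pL r) - 2 * kY R (pR r) + kY R (pM r hr)) * kE R i)
  | braidNone (r : Fin (n - 1)) (hr : r.1 + 1 < n - 1) (i : Fin n → ZMod e)
      (h : ¬(i (pM r hr) = i (pL r) ∧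
        (i (pR r) = i (pL r) + 1 ∨ i (pL r) = i (pR r) + 1))) :
      KLRRel R n e ℓ κ (kPsi R r * kPsi R ⟨r.1 + 1, hr⟩ * kPsi R r * kE R i)
        (kPsi R ⟨r.1 + 1, hr⟩ * kPsi R r * kPsi R ⟨r.1 + 1, hr⟩ * kE R i)

/-- The cyclotomic quiver Hecke algebra `R_n^Λ(R)`, `Λ = Σ_l Λ_{κ_l mod e}`. -/
noncomputable abbrev KLR (R : Type*) [CommRing R] (n e ℓ : ℕ) [NeZero e] (κ : ℕ → ℤ) :
    Type _ :=
  RingQuot (KLRRel R n e ℓ κ)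

/-- The generator `e(i)` of the cyclotomic quiver Hecke algebra. -/
noncomputable def KeGen (R : Type*) [CommRing R] (n e ℓ : ℕ) [NeZero e] (κ : ℕ → ℤ)
    (i : Fin n → ZMod e) : KLR R n e ℓ κ :=
  RingQuot.mkAlgHom R (KLRRel R n e ℓ κ) (kE R i)

/-- The generator `ψ_r` of the cyclotomic quiver Hecke algebra. -/
noncomputable def KpsiGen (R : Type*) [CommRing R] (n e ℓ : ℕ) [NeZero e] (κ : ℕ → ℤ)
    (r : Fin (n - 1)) : KLR R n e ℓ κ :=
  RingQuot.mkAlgHom R (KLRRel R n e ℓ κ) (kPsi R r)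

/-- The generator `y_k` of the cyclotomic quiver Hecke algebra. -/
noncomputable def KyGen (R : Type*) [CommRing R] (n e ℓ : ℕ) [NeZero e] (κ : ℕ → ℤ)
    (k : Fin n) : KLR R n e ℓ κ :=
  RingQuot.mkAlgHom R (KLRRel R n e ℓ κ) (kY R k)

end Paper
/-! ## The deformed cyclotomic quiver Hecke algebra -/

namespace Paper

/-- `y_k^⟨d⟩ = t^d y_k + [d]_t` in the free algebra. -/
def ydot (R : Type*) [CommRing R] (t : Rˣ) {n e : ℕ} (d : ℤ) (k : Fin n) :
    FreeAlgebra R (KLRGen n e) :=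
  algebraMap R _ ((t ^ d : Rˣ) : R) * kY R k + algebraMap R _ (qintU t d)

/-- `ρ_r(i) = î_r - î_{r+1}` for `i ∈ I^n`. -/
def rhoI {n e : ℕ} (i : Fin n → ZMod e) (r : Fin (n - 1)) : ℤ :=
  ((i (pL r)).val : ℤ) - ((i (pR r)).val : ℤ)

/-- The defining relations of the deformed cyclotomic quiver Hecke algebra `R_n(O)`. -/
inductive DefKLRRel (R : Type*) [CommRing R] (t : Rˣ) (n e ℓ : ℕ) [NeZero e] (κ : ℕ → ℤ) :
    FreeAlgebra R (KLRGen n e) → FreeAlgebra R (KLRGen n e) → Prop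
  | cyc (h : 0 < n) (i : Fin n → ZMod e) :
      DefKLRRel R t n e ℓ κ
        ((((List.range ℓ).map fun l =>
            if ((κ l : ZMod e) = i ⟨0, h⟩) then
              kY R (⟨0, h⟩ : Fin n) -
                algebraMap R _ (qintU t (κ l - ((i ⟨0, h⟩).val : ℤ)))
            else 1).prod) * kE R i) 0
  | orth (i j : Fin n → ZMod e) (h : i ≠ j) : DefKLRRel R t n e ℓ κ (kE R i * kE R j) 0
  | idem (i : Fin n → ZMod e) : DefKLRRel R t n e ℓ κ (kE R i * kE R i) (kE R i)
  | complete : DefKLRRel R t n e ℓ κ (∑ i : Fin n → ZMod e, kE R i) 1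
  | yE (k : Fin n) (i : Fin n → ZMod e) :
      DefKLRRel R t n e ℓ κ (kY R k * kE R i) (kE R i * kY R k)
  | psiE (r : Fin (n - 1)) (i : Fin n → ZMod e) :
      DefKLRRel R t n e ℓ κ (kPsi R r * kE R i) (kE R (swapSeq i r) * kPsi R r)
  | yy (k m : Fin n) : DefKLRRel R t n e ℓ κ (kY R k * kY R m) (kY R m * kY R k)
  | psiyEq (r : Fin (n - 1)) (i : Fin n → ZMod e) (h : i (pL r) = i (pR r)) :
      DefKLRRel R t n e ℓ κ (kPsi R r * kY R (pR r) * kE R i)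
        ((kY R (pL r) * kPsi R r + 1) * kE R i)
  | psiyNe (r : Fin (n - 1)) (i : Fin n → ZMod e) (h : i (pL r) ≠ i (pR r)) :
      DefKLRRel R t n e ℓ κ (kPsi R r * kY R (pR r) * kE R i)
        (kY R (pL r) * kPsi R r * kE R i)
  | ypsiEq (r : Fin (n - 1)) (i : Fin n → ZMod e) (h : i (pL r) = i (pR r)) :
      DefKLRRel R t n e ℓ κ (kY R (pR r) * kPsi R r * kE R i)
        ((kPsi R r * kY R (pL r) + 1) * kE R i)
  | ypsiNe (r : Fin (n - 1)) (i : Fin n → ZMod e) (h : i (pL r) ≠ i (pR r)) :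
      DefKLRRel R t n e ℓ κ (kY R (pR r) * kPsi R r * kE R i)
        (kPsi R r * kY R (pL r) * kE R i)
  | psiyFar (r : Fin (n - 1)) (k : Fin n) (h : k.1 ≠ r.1 ∧ k.1 ≠ r.1 + 1) :
      DefKLRRel R t n e ℓ κ (kPsi R r * kY R k) (kY R k * kPsi R r)
  | psipsiFar (r s : Fin (n - 1)) (h : r.1 + 1 < s.1 ∨ s.1 + 1 < r.1) :
      DefKLRRel R t n e ℓ κ (kPsi R r * kPsi R s) (kPsi R s * kPsi R r)
  | quadEq (r : Fin (n - 1)) (i : Fin n → ZMod e) (h : i (pL r) = i (pR r)) :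
      DefKLRRel R t n e ℓ κ (kPsi R r ^ 2 * kE R i) 0
  | quadR (r : Fin (n - 1)) (i : Fin n → ZMod e)
      (h1 : i (pR r) = i (pL r) + 1) (h2 : i (pL r) ≠ i (pR r) + 1) :
      DefKLRRel R t n e ℓ κ (kPsi R r ^ 2 * kE R i)
        ((ydot R t (1 + rhoI i r) (pL r) - kY R (pR r)) * kE R i)
  | quadL (r : Fin (n - 1)) (i : Fin n → ZMod e)
      (h1 : i (pL r) = i (pR r) + 1) (h2 : i (pR r) ≠ i (pL r) + 1) :
      DefKLRRel R t n e ℓ κ (kPsi R r ^ 2 * kE R i)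
        ((ydot R t (1 - rhoI i r) (pR r) - kY R (pL r)) * kE R i)
  | quadBoth (r : Fin (n - 1)) (i : Fin n → ZMod e)
      (h1 : i (pR r) = i (pL r) + 1) (h2 : i (pL r) = i (pR r) + 1) :
      DefKLRRel R t n e ℓ κ (kPsi R r ^ 2 * kE R i)
        ((ydot R t (1 + rhoI i r) (pL r) - kY R (pR r)) *
          (ydot R t (1 - rhoI i r) (pR r) - kY R (pL r)) * kE R i)
  | quadNone (r : Fin (n - 1)) (i : Fin n → ZMod e) (h1 : i (pL r) ≠ i (pR r))
      (h2 : i (pR r) ≠ i (pL r) + 1) (h3 : i (pL r) ≠ i (pR r) + 1) :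
      DefKLRRel R t n e ℓ κ (kPsi R r ^ 2 * kE R i) (kE R i)
  | braidBoth (r : Fin (n - 1)) (hr : r.1 + 1 < n - 1) (i : Fin n → ZMod e)
      (h0 : i (pM r hr) = i (pL r)) (h1 : i (pR r) = i (pL r) + 1)
      (h2 : i (pL r) = i (pR r) + 1) :
      DefKLRRel R t n e ℓ κ
        ((kPsi R r * kPsi R ⟨r.1 + 1, hr⟩ * kPsi R r -
            kPsi R ⟨r.1 + 1, hr⟩ * kPsi R r * kPsi R ⟨r.1 + 1, hr⟩) * kE R i)
        ((ydot R t (1 + rhoI i r) (pL r) + ydot R t (1 + rhoI i r) (pM r hr) -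
            ydot R t (1 + rhoI i r) (pR r) - ydot R t (1 - rhoI i r) (pR r)) * kE R i)
  | braidR (r : Fin (n - 1)) (hr : r.1 + 1 < n - 1) (i : Fin n → ZMod e)
      (h0 : i (pM r hr) = i (pL r)) (h1 : i (pR r) = i (pL r) + 1)
      (h2 : i (pL r) ≠ i (pR r) + 1) :
      DefKLRRel R t n e ℓ κ
        ((kPsi R r * kPsi R ⟨r.1 + 1, hr⟩ * kPsi R r -
            kPsi R ⟨r.1 + 1, hr⟩ * kPsi R r * kPsi R ⟨r.1 + 1, hr⟩) * kE R i)
        (algebraMap R _ (-(((t ^ (1 + rhoI i r) : Rˣ) : R))) * kE R i)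
  | braidL (r : Fin (n - 1)) (hr : r.1 + 1 < n - 1) (i : Fin n → ZMod e)
      (h0 : i (pM r hr) = i (pL r)) (h1 : i (pL r) = i (pR r) + 1)
      (h2 : i (pR r) ≠ i (pL r) + 1) :
      DefKLRRel R t n e ℓ κ
        ((kPsi R r * kPsi R ⟨r.1 + 1, hr⟩ * kPsi R r -
            kPsi R ⟨r.1 + 1, hr⟩ * kPsi R r * kPsi R ⟨r.1 + 1, hr⟩) * kE R i)
        (kE R i)
  | braidNone (r : Fin (n - 1)) (hr : r.1 + 1 < n - 1) (i : Fin n → ZMod e)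
      (h : ¬(i (pM r hr) = i (pL r) ∧
        (i (pR r) = i (pL r) + 1 ∨ i (pL r) = i (pR r) + 1))) :
      DefKLRRel R t n e ℓ κ
        ((kPsi R r * kPsi R ⟨r.1 + 1, hr⟩ * kPsi R r -
            kPsi R ⟨r.1 + 1, hr⟩ * kPsi R r * kPsi R ⟨r.1 + 1, hr⟩) * kE R i) 0

/-- The deformed cyclotomic quiver Hecke algebra `R_n(R)`. -/
noncomputable abbrev DefKLR (R : Type*) [CommRing R] (t : Rˣ) (n e ℓ : ℕ) [NeZero e]
    (κ : ℕ → ℤ) : Type _ :=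
  RingQuot (DefKLRRel R t n e ℓ κ)

/-- The generator `f_i` of the deformed cyclotomic quiver Hecke algebra. -/
noncomputable def DfGen (R : Type*) [CommRing R] (t : Rˣ) (n e ℓ : ℕ) [NeZero e]
    (κ : ℕ → ℤ) (i : Fin n → ZMod e) : DefKLR R t n e ℓ κ :=
  RingQuot.mkAlgHom R (DefKLRRel R t n e ℓ κ) (kE R i)

/-- The generator `ψ_r` of the deformed cyclotomic quiver Hecke algebra. -/
noncomputable def DpsiGen (R : Type*) [CommRing R] (t : Rˣ) (n e ℓ : ℕ) [NeZero e]
    (κ : ℕ → ℤ) (r : Fin (n - 1)) : DefKLR R t n e ℓ κ :=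
  RingQuot.mkAlgHom R (DefKLRRel R t n e ℓ κ) (kPsi R r)

/-- The generator `y_k` of the deformed cyclotomic quiver Hecke algebra. -/
noncomputable def DyGen (R : Type*) [CommRing R] (t : Rˣ) (n e ℓ : ℕ) [NeZero e]
    (κ : ℕ → ℤ) (k : Fin n) : DefKLR R t n e ℓ κ :=
  RingQuot.mkAlgHom R (DefKLRRel R t n e ℓ κ) (kY R k)

/-! ## Seminormal idempotents -/

/-- The seminormal idempotent `F_T` of the semisimple cyclotomic Hecke algebra:
`F_T = ∏_{k=1}^n ∏_{c ∈ Cont(n), [c_k(T)] ≠ [c]} (L_k - [c]) / ([c_k(T)] - [c])`. -/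
noncomputable def Fidem (K : Type*) [Field K] (tK : Kˣ) (n ℓ : ℕ) (κ : ℕ → ℤ)
    (T : StdTableau ℓ n) : CycHecke K tK n ℓ κ :=
  ((List.finRange n).map (fun k =>
    (((contFinset ℓ n κ).sort (· ≤ ·)).map (fun c =>
      if qint (tK : K) (content κ T (k.1 + 1)) ≠ qint (tK : K) c then
        (Lgen K tK n ℓ κ k - algebraMap K _ (qint (tK : K) c)) *
          algebraMap K _ ((qint (tK : K) (content κ T (k.1 + 1)) - qint (tK : K) c)⁻¹)
      else 1)).prod)).prod

/-- The residue idempotent `f_i = Σ_{T ∈ Std(i)} F_T`. -/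
noncomputable def fres (K : Type*) [Field K] (tK : Kˣ) (n ℓ e : ℕ) (κ : ℕ → ℤ)
    (i : Fin n → ZMod e) : CycHecke K tK n ℓ κ :=
  ∑ᶠ T : {T : StdTableau ℓ n // resSeq e κ T = i}, Fidem K tK n ℓ κ T.1

/-- The simultaneous two-sided eigenspace `H_{S,T}` of the Jucys–Murphy elements. -/
noncomputable def eigSub (K : Type*) [Field K] (tK : Kˣ) (n ℓ : ℕ) (κ : ℕ → ℤ)
    (S T : StdTableau ℓ n) : Submodule K (CycHecke K tK n ℓ κ) where
  carrier := {h | ∀ k : Fin n,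
      Lgen K tK n ℓ κ k * h = qint (tK : K) (content κ S (k.1 + 1)) • h ∧
      h * Lgen K tK n ℓ κ k = qint (tK : K) (content κ T (k.1 + 1)) • h}
  add_mem' := by
    intro a b ha hb
    intro k
    obtain ⟨h1, h2⟩ := ha k
    obtain ⟨h3, h4⟩ := hb k
    exact ⟨by rw [mul_add, h1, h3, smul_add], by rw [add_mul, h2, h4, smul_add]⟩
  zero_mem' := by intro k; simp
  smul_mem' := by
    intro c a ha
    intro k
    obtain ⟨h1, h2⟩ := ha k
    constructor
    · rw [mul_smul_comm, h1, smul_comm]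
    · rw [smul_mul_assoc, h2, smul_comm]

end Paper

namespace Paper


/-! ## Quantum integer lemmas -/

theorem qint_zero {K : Type*} [Field K] (x : K) : qint x 0 = 0 := by simp [qint]

theorem qint_succ {K : Type*} [Field K] {x : K} (hx : x ≠ 0) (d : ℤ) :
    qint x (d + 1) = qint x d + x ^ d := by
  rcases lt_trichotomy d (-1) with h | h | h
  · obtain ⟨k, rfl⟩ : ∃ k : ℕ, d = -((k : ℤ) + 2) := ⟨(-d - 2).toNat, by omega⟩
    have e1 : (-(-((k : ℤ) + 2) + 1)).toNat = k + 1 := by omega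
    have e2 : (-(-((k : ℤ) + 2))).toNat = k + 1 + 1 := by omega
    unfold qint
    rw [if_neg (by omega), if_neg (by omega), e1, e2, Finset.sum_range_succ _ (k + 1)]
    have : -(((k + 1 : ℕ) : ℤ) + 1) = -((k : ℤ) + 2) := by push_cast; ring
    rw [this]; ring
  · subst h
    simp [qint]
  · obtain ⟨k, rfl⟩ : ∃ k : ℕ, d = (k : ℤ) := ⟨d.toNat, by omega⟩
    have e1 : ((k : ℤ) + 1).toNat = k + 1 := by omega
    unfold qint
    rw [if_pos (by omega), if_pos (by omega), e1, Finset.sum_range_succ]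
    simp

theorem qint_add {K : Type*} [Field K] {x : K} (hx : x ≠ 0) (a b : ℤ) :
    qint x (a + b) = qint x a + x ^ a * qint x b := by
  induction b using Int.induction_on with
  | zero => simp [qint_zero]
  | succ b ih =>
    rw [← add_assoc, qint_succ hx, ih, qint_succ hx, zpow_add₀ hx]; ring
  | pred b ih =>
    have h1 := qint_succ hx (a + (-(b : ℤ) - 1))
    have h2 := qint_succ hx (-(b : ℤ) - 1)
    rw [show a + (-(b : ℤ) - 1) + 1 = a + -(b : ℤ) by ring, zpow_add₀ hx] at h1
    rw [show (-(b : ℤ) - 1) + 1 = -(b : ℤ) by ring] at h2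
    rw [ih, h2] at h1
    linear_combination -h1

theorem qint_one {K : Type*} [Field K] (x : K) : qint x 1 = 1 := by simp [qint]

theorem qint_add_one {K : Type*} [Field K] {x : K} (hx : x ≠ 0) (a : ℤ) :
    qint x (a + 1) = x * qint x a + 1 := by
  rw [add_comm, qint_add hx, qint_one]; simp; ring

theorem qint_D {K : Type*} [Field K] {x : K} (hx : x ≠ 0) (a : ℤ) :
    (x - 1) * qint x a + 1 = x ^ a := by
  have h1 := qint_succ hx a
  rw [qint_add_one hx] at h1
  linear_combination h1

theorem qint_eq_iff {K : Type*} [Field K] {x : K} (hx : x ≠ 0) (a b : ℤ) :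
    qint x a = qint x b ↔ qint x (a - b) = 0 := by
  have := qint_add hx b (a - b)
  rw [show b + (a - b) = a by ring] at this
  rw [this]
  simp [zpow_ne_zero b hx]

theorem qint_neg_eq_zero {K : Type*} [Field K] {x : K} (hx : x ≠ 0) (a : ℤ) :
    qint x (-a) = 0 ↔ qint x a = 0 := by
  have h1 := qint_eq_iff hx 0 a
  have h2 := qint_eq_iff hx a 0
  rw [zero_sub] at h1
  rw [sub_zero] at h2
  rw [← h1, ← h2, eq_comm]

theorem qintU_eq {K : Type*} [Field K] (t : Kˣ) (d : ℤ) : qintU t d = qint (t : K) d := by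
  simp [qint, qintU]

/-- Usable form of the separation condition. -/
structure Sep {K : Type*} [Field K] (x : K) (n ℓ : ℕ) (κ : ℕ → ℤ) : Prop where
  ne : x ≠ 0
  one : ∀ d : ℤ, d ≠ 0 → |d| ≤ n → qint x d ≠ 0
  two : ∀ l m : ℕ, l < ℓ → m < ℓ → l ≠ m → ∀ d : ℤ, |d| < n → qint x (κ l - κ m + d) ≠ 0

theorem SeparatesF.sep {K : Type*} [Field K] {t : Kˣ} {n ℓ : ℕ} {κ : ℕ → ℤ}
    (h : SeparatesF t n ℓ κ) : Sep (t : K) n ℓ κ := by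
  unfold SeparatesF at h
  obtain ⟨h1, h2⟩ := mul_ne_zero_iff.mp h
  rw [Finset.prod_ne_zero_iff] at h1 h2
  have A : ∀ l m : ℕ, l < ℓ → m < ℓ → l < m → ∀ d : ℤ, |d| < n →
      qint (t : K) (κ l - κ m + d) ≠ 0 := by
    intro l m hl hm hlm d hd
    have h3 := h2 l (Finset.mem_range.mpr hl)
    rw [Finset.prod_ne_zero_iff] at h3
    have h4 := h3 m (Finset.mem_Ioo.mpr ⟨hlm, hm⟩)
    rw [Finset.prod_ne_zero_iff] at h4
    exact h4 d (Finset.mem_Ioo.mpr (abs_lt.mp hd))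
  refine ⟨t.ne_zero, ?_, ?_⟩
  · intro d hd hdn
    have B : ∀ k : ℕ, k ≠ 0 → k ≤ n → qint (t : K) (k : ℤ) ≠ 0 := fun k hk hkn =>
      h1 k (Finset.mem_Icc.mpr ⟨by omega, hkn⟩)
    have := abs_le.mp hdn
    rcases lt_or_gt_of_ne hd with h | h
    · rw [Ne, ← qint_neg_eq_zero t.ne_zero]
      have := B (-d).toNat (by omega) (by omega)
      rwa [show (((-d).toNat : ℕ) : ℤ) = -d by omega] at this
    · have := B d.toNat (by omega) (by omega)
      rwa [show ((d.toNat : ℕ) : ℤ) = d by omega] at this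
  · intro l m hl hm hlm d hd
    rcases lt_or_gt_of_ne hlm with h | h
    · exact A l m hl hm h d hd
    · rw [Ne, ← qint_neg_eq_zero t.ne_zero,
        show -(κ l - κ m + d) = κ m - κ l + -d by ring]
      exact A m l hm hl h (-d) (by rwa [abs_neg])

/-! ## Paths of nodes -/

/-- Offset of a node. -/
def off (x : Node) : ℤ := (x.2.2 : ℤ) - (x.2.1 : ℤ)

/-- Content of a node. -/
def cont (κ : ℕ → ℤ) (x : Node) : ℤ := κ x.1 + (x.2.2 : ℤ) - (x.2.1 : ℤ)

theorem Sep.nodes {K : Type*} [Field K] {x : K} {n ℓ : ℕ} {κ : ℕ → ℤ} (S : Sep x n ℓ κ)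
    {A B : Node} (hA : A.1 < ℓ) (hB : B.1 < ℓ) {δ : ℤ}
    (h : qint x (cont κ A) = qint x (cont κ B + δ))
    (h1 : A.1 = B.1 → |off A - off B - δ| ≤ n) (h2 : A.1 ≠ B.1 → |off A - off B - δ| < n) :
    A.1 = B.1 ∧ off A = off B + δ := by
  rw [qint_eq_iff S.ne] at h
  have e : cont κ A - (cont κ B + δ) = κ A.1 - κ B.1 + (off A - off B - δ) := by
    simp only [cont, off]; ring
  rw [e] at h
  by_cases hAB : A.1 = B.1
  · refine ⟨hAB, ?_⟩
    by_contra hne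
    refine S.one (off A - off B - δ) (fun h0 => hne (by linarith)) (h1 hAB) ?_
    rw [hAB] at h
    simpa using h
  · exact absurd h (S.two _ _ hA hB hAB _ (h2 hAB))

/-- `B` is addable to the set of the first `k` nodes of `s`. -/
structure Add (ℓ : ℕ) (s : ℕ → Node) (k : ℕ) (B : Node) : Prop where
  comp : B.1 < ℓ
  new : ∀ j < k, s j ≠ B
  up : ∀ i, B.2.1 = i + 1 → ∃ j < k, s j = (B.1, i, B.2.2)
  left : ∀ i, B.2.2 = i + 1 → ∃ j < k, s j = (B.1, B.2.1, i)

/-- The first `m` nodes of `s` form a standard path. -/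
def IsPath (ℓ m : ℕ) (s : ℕ → Node) : Prop := ∀ k < m, Add ℓ s k (s k)

theorem Add.congr {ℓ k : ℕ} {s s' : ℕ → Node} {B : Node} (h : Add ℓ s k B)
    (e : ∀ j < k, s j = s' j) : Add ℓ s' k B where
  comp := h.comp
  new j hj := by rw [← e j hj]; exact h.new j hj
  up i hi := by obtain ⟨j, hj, h'⟩ := h.up i hi; exact ⟨j, hj, by rw [← e j hj, h']⟩
  left i hi := by obtain ⟨j, hj, h'⟩ := h.left i hi; exact ⟨j, hj, by rw [← e j hj, h']⟩

theorem IsPath.congr {ℓ m : ℕ} {s s' : ℕ → Node} (h : IsPath ℓ m s)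
    (e : ∀ j < m, s j = s' j) : IsPath ℓ m s' := by
  intro k hk
  rw [← e k hk]
  exact (h k hk).congr fun j hj => e j (hj.trans hk)

theorem IsPath.mono {ℓ m m' : ℕ} {s : ℕ → Node} (h : IsPath ℓ m s) (hm : m' ≤ m) :
    IsPath ℓ m' s := fun k hk => h k (hk.trans_le hm)

theorem IsPath.ext {ℓ m : ℕ} {s : ℕ → Node} (h : IsPath ℓ m s) {B : Node}
    (hB : Add ℓ s m B) : IsPath ℓ (m + 1) (Function.update s m B) := by
  have e : ∀ j < m, s j = Function.update s m B j := fun j hj => by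
    rw [Function.update_of_ne (by omega)]
  intro k hk
  rcases Nat.lt_succ_iff_lt_or_eq.mp hk with h' | rfl
  · exact h.congr e k h'
  · rw [Function.update_self]; exact hB.congr e

theorem Add.step {ℓ m : ℕ} {s : ℕ → Node} {B : Node} (h : Add ℓ s m B) (hne : s m ≠ B) :
    Add ℓ s (m + 1) B where
  comp := h.comp
  new j hj := by
    rcases Nat.lt_succ_iff_lt_or_eq.mp hj with h' | rfl
    · exact h.new j h'
    · exact hne
  up i hi := by obtain ⟨j, hj, h'⟩ := h.up i hi; exact ⟨j, by omega, h'⟩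
  left i hi := by obtain ⟨j, hj, h'⟩ := h.left i hi; exact ⟨j, by omega, h'⟩

/-- If `a` is below `s k` coordinatewise then it occurs, not later than `k`. -/
theorem IsPath.down {ℓ m : ℕ} {s : ℕ → Node} (h : IsPath ℓ m s) :
    ∀ k < m, ∀ r c, r ≤ (s k).2.1 → c ≤ (s k).2.2 → ∃ j ≤ k, s j = ((s k).1, r, c) := by
  intro k
  induction k using Nat.strong_induction_on with
  | _ k ih =>
    intro hk r c hr hc
    by_cases h1 : r = (s k).2.1
    · by_cases h2 : c = (s k).2.2
      · exact ⟨k, le_rfl, by rw [h1, h2]⟩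
      · obtain ⟨j, hj, e⟩ := (h k hk).left ((s k).2.2 - 1) (by omega)
        obtain ⟨j', hj', e'⟩ := ih j hj (by omega) r c (by rw [e]; exact hr)
          (by rw [e]; simp only; omega)
        exact ⟨j', by omega, by rw [e', e]⟩
    · obtain ⟨j, hj, e⟩ := (h k hk).up ((s k).2.1 - 1) (by omega)
      obtain ⟨j', hj', e'⟩ := ih j hj (by omega) r c (by rw [e]; simp only; omega)
          (by rw [e]; exact hc)
      exact ⟨j', by omega, by rw [e', e]⟩

theorem IsPath.inj {ℓ m : ℕ} {s : ℕ → Node} (h : IsPath ℓ m s) {j k : ℕ} (hj : j < m)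
    (hk : k < m) (e : s j = s k) : j = k := by
  rcases lt_trichotomy j k with h' | h' | h'
  · exact absurd e ((h k hk).new j h')
  · exact h'
  · exact absurd e.symm ((h j hj).new k h')

theorem IsPath.le_of_le {ℓ m : ℕ} {s : ℕ → Node} (h : IsPath ℓ m s) {j k : ℕ} (hj : j < m)
    (hk : k < m) (e1 : (s j).1 = (s k).1) (e2 : (s j).2.1 ≤ (s k).2.1)
    (e3 : (s j).2.2 ≤ (s k).2.2) : j ≤ k := by
  obtain ⟨i, hi, e⟩ := h.down k hk _ _ e2 e3
  have : i = j := h.inj (by omega) hj (by rw [e, ← e1])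
  omega

theorem IsPath.rowcount {ℓ m : ℕ} {s : ℕ → Node} (h : IsPath ℓ m s) :
    ∀ k < m, (s k).2.2 + 1 ≤
      ((Finset.range (k + 1)).filter fun i => (s i).1 = (s k).1 ∧ (s i).2.1 = 0).card := by
  intro k
  induction k using Nat.strong_induction_on with
  | _ k ih =>
    intro hk
    by_cases h1 : (s k).2.1 = 0
    · by_cases h2 : (s k).2.2 = 0
      · rw [h2, zero_add, Nat.one_le_iff_ne_zero, Finset.card_ne_zero]
        exact ⟨k, by simp [h1]⟩
      · obtain ⟨j, hj, e⟩ := (h k hk).left ((s k).2.2 - 1) (by omega)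
        have := ih j hj (by omega)
        have hlt : ((Finset.range (j + 1)).filter
            fun i => (s i).1 = (s j).1 ∧ (s i).2.1 = 0).card <
          ((Finset.range (k + 1)).filter
            fun i => (s i).1 = (s k).1 ∧ (s i).2.1 = 0).card := by
          apply Finset.card_lt_card
          rw [Finset.ssubset_iff_of_subset]
          · exact ⟨k, by simp [h1], by simp; omega⟩
          · intro i
            simp only [Finset.mem_filter, Finset.mem_range, e]
            intro hi
            exact ⟨by omega, hi.2⟩
        have e' : (s j).2.2 = (s k).2.2 - 1 := by rw [e]
        omega
    · obtain ⟨j, hj, e⟩ := (h k hk).up ((s k).2.1 - 1) (by omega)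
      have := ih j hj (by omega)
      have hlt : ((Finset.range (j + 1)).filter
            fun i => (s i).1 = (s j).1 ∧ (s i).2.1 = 0).card ≤
          ((Finset.range (k + 1)).filter
            fun i => (s i).1 = (s k).1 ∧ (s i).2.1 = 0).card := by
        apply Finset.card_le_card
        intro i
        simp only [Finset.mem_filter, Finset.mem_range, e]
        intro hi
        exact ⟨by omega, hi.2⟩
      have e' : (s j).2.2 = (s k).2.2 := by rw [e]
      omega

theorem IsPath.colcount {ℓ m : ℕ} {s : ℕ → Node} (h : IsPath ℓ m s) :
    ∀ k < m, (s k).2.1 ≤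
      ((Finset.range (k + 1)).filter fun i => (s i).1 = (s k).1 ∧ ¬ (s i).2.1 = 0).card := by
  intro k
  induction k using Nat.strong_induction_on with
  | _ k ih =>
    intro hk
    by_cases h1 : (s k).2.1 = 0
    · rw [h1]; exact Nat.zero_le _
    · obtain ⟨j, hj, e⟩ := (h k hk).up ((s k).2.1 - 1) (by omega)
      have := ih j hj (by omega)
      have hlt : ((Finset.range (j + 1)).filter
            fun i => (s i).1 = (s j).1 ∧ ¬ (s i).2.1 = 0).card <
          ((Finset.range (k + 1)).filter
            fun i => (s i).1 = (s k).1 ∧ ¬ (s i).2.1 = 0).card := by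
        apply Finset.card_lt_card
        rw [Finset.ssubset_iff_of_subset]
        · exact ⟨k, by simp [h1], by simp; omega⟩
        · intro i
          simp only [Finset.mem_filter, Finset.mem_range, e]
          intro hi
          exact ⟨by omega, hi.2⟩
      have e' : (s j).2.1 = (s k).2.1 - 1 := by rw [e]
      omega

/-- Number of nodes in component `l` among the first `m`. -/
noncomputable def ncomp (s : ℕ → Node) (m l : ℕ) : ℕ :=
  ((Finset.range m).filter fun i => (s i).1 = l).card

theorem IsPath.hook {ℓ m : ℕ} {s : ℕ → Node} (h : IsPath ℓ m s) {j k : ℕ} (hj : j < m)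
    (hk : k < m) (e : (s j).1 = (s k).1) :
    (s j).2.2 + (s k).2.1 + 1 ≤ ncomp s m (s k).1 := by
  have h1 := h.rowcount j hj
  have h2 := h.colcount k hk
  have h3 := Finset.card_le_card (s := (Finset.range (j + 1)).filter
    fun i => (s i).1 = (s j).1 ∧ (s i).2.1 = 0) (t := ((Finset.range m).filter
      fun i => (s i).1 = (s k).1).filter fun i => (s i).2.1 = 0) (by
      intro i
      simp only [Finset.mem_filter, Finset.mem_range, e]
      intro hi
      exact ⟨⟨by omega, hi.2.1⟩, hi.2.2⟩)
  have h4 := Finset.card_le_card (s := (Finset.range (k + 1)).filter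
    fun i => (s i).1 = (s k).1 ∧ ¬ (s i).2.1 = 0) (t := ((Finset.range m).filter
      fun i => (s i).1 = (s k).1).filter fun i => ¬ (s i).2.1 = 0) (by
      intro i
      simp only [Finset.mem_filter, Finset.mem_range]
      intro hi
      exact ⟨⟨by omega, hi.2.1⟩, hi.2.2⟩)
  have h5 := Finset.card_filter_add_card_filter_not (s := (Finset.range m).filter
      fun i => (s i).1 = (s k).1) (fun i => (s i).2.1 = 0)
  unfold ncomp
  omega

theorem ncomp_le (s : ℕ → Node) (m l : ℕ) : ncomp s m l ≤ m := by
  unfold ncomp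
  exact (Finset.card_filter_le _ _).trans (by simp)

theorem ncomp_add_le (s : ℕ → Node) (m : ℕ) {l l' : ℕ} (hl : l ≠ l') :
    ncomp s m l + ncomp s m l' ≤ m := by
  unfold ncomp
  rw [← Finset.card_union_of_disjoint]
  · refine (Finset.card_le_card (t := Finset.range m) ?_).trans (by simp)
    intro i
    simp only [Finset.mem_union, Finset.mem_filter]
    tauto
  · rw [Finset.disjoint_left]
    intro i
    simp only [Finset.mem_filter]
    rintro ⟨_, rfl⟩ ⟨_, h⟩
    exact hl h

theorem IsPath.bound_same {ℓ m : ℕ} {s : ℕ → Node} (h : IsPath ℓ m s) {j k : ℕ} (hj : j < m)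
    (hk : k < m) (e : (s j).1 = (s k).1) : |off (s j) - off (s k)| + 1 ≤ m := by
  have h1 := h.hook hj hk e
  have h2 := h.hook hk hj e.symm
  have h3 := ncomp_le s m (s k).1
  have h4 := ncomp_le s m (s j).1
  have : |off (s j) - off (s k)| ≤ (m : ℤ) - 1 := by
    rw [abs_le]; unfold off; constructor <;> omega
  omega

theorem IsPath.bound_diff {ℓ m : ℕ} {s : ℕ → Node} (h : IsPath ℓ m s) {j k : ℕ} (hj : j < m)
    (hk : k < m) (e : (s j).1 ≠ (s k).1) : |off (s j) - off (s k)| + 2 ≤ m := by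
  have h1 := h.hook hj hj rfl
  have h2 := h.hook hk hk rfl
  have h3 := ncomp_add_le s m e
  have : |off (s j) - off (s k)| ≤ (m : ℤ) - 2 := by
    rw [abs_le]; unfold off; constructor <;> omega
  omega

/-- Two nodes of a path, compared via quantum contents. -/
theorem IsPath.compare {K : Type*} [Field K] {x : K} {n ℓ : ℕ} {κ : ℕ → ℤ} (S : Sep x n ℓ κ)
    {m : ℕ} {s : ℕ → Node} (h : IsPath ℓ m s) {j k : ℕ} (hj : j < m) (hk : k < m) {δ : ℤ}
    (hm : m + |δ| ≤ n + 1) (e : qint x (cont κ (s j)) = qint x (cont κ (s k) + δ)) :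
    (s j).1 = (s k).1 ∧ off (s j) = off (s k) + δ := by
  have ht := abs_sub (off (s j) - off (s k)) δ
  refine S.nodes (h j hj).comp (h k hk).comp e (fun e' => ?_) (fun e' => ?_)
  · have := h.bound_same hj hk e'
    linarith
  · have := h.bound_diff hj hk e'
    linarith

theorem Add.compare {K : Type*} [Field K] {x : K} {n ℓ : ℕ} {κ : ℕ → ℤ} (S : Sep x n ℓ κ)
    {m : ℕ} {s : ℕ → Node} (h : IsPath ℓ m s) {B B' : Node} (hB : Add ℓ s m B)
    (hB' : Add ℓ s m B') {δ : ℤ} (hm : m + 1 + |δ| ≤ n)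
    (e : qint x (cont κ B) = qint x (cont κ B' + δ)) :
    B.1 = B'.1 ∧ off B = off B' + δ := by
  by_cases hne : B = B'
  · subst hne
    have h1 := h.ext hB
    have := h1.compare S (j := m) (k := m) (by omega) (by omega) (δ := δ)
      (by push_cast; linarith) (by simpa using e)
    simpa using this
  · have h1 := h.ext hB
    have h2 : Add ℓ (Function.update s m B) (m + 1) B' := by
      refine Add.step (hB'.congr fun j hj => ?_) (by simpa using hne)
      rw [Function.update_of_ne (by omega)]
    have h3 := (h1.ext h2).compare S (j := m) (k := m + 1) (by omega) (by omega) (δ := δ)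
      (by push_cast; linarith) (by simpa using e)
    simpa using h3

/-- An addable node is not dominated by a node of the path. -/
theorem Add.not_le {ℓ m : ℕ} {s : ℕ → Node} (h : IsPath ℓ m s) {B : Node}
    (hB : Add ℓ s m B) {k : ℕ} (hk : k < m) (e1 : B.1 = (s k).1) (e2 : B.2.1 ≤ (s k).2.1)
    (e3 : B.2.2 ≤ (s k).2.2) : False := by
  obtain ⟨j, hj, e⟩ := h.down k hk _ _ e2 e3
  exact hB.new j (by omega) (by rw [e, ← e1])

theorem Add.off_inj {ℓ m : ℕ} {s : ℕ → Node} (h : IsPath ℓ m s) {B B' : Node}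
    (hB : Add ℓ s m B) (hB' : Add ℓ s m B') (e : B.1 = B'.1) (e' : off B = off B') :
    B = B' := by
  have key : ∀ B B' : Node, Add ℓ s m B → Add ℓ s m B' → B.1 = B'.1 → off B = off B' →
      B.2.1 < B'.2.1 → False := by
    intro B B' hB hB' e e' hlt
    unfold off at e'
    obtain ⟨j, hj, ej⟩ := hB'.up (B'.2.1 - 1) (by omega)
    exact hB.not_le h hj (by rw [ej]; exact e) (by rw [ej]; simp only; omega)
      (by rw [ej]; simp only; omega)
  rcases lt_trichotomy B.2.1 B'.2.1 with h1 | h1 | h1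
  · exact (key B B' hB hB' e e' h1).elim
  · unfold off at e'
    exact Prod.ext e (Prod.ext h1 (by omega))
  · exact (key B' B hB' hB e.symm e'.symm h1).elim

theorem Add.off_nadj {ℓ m : ℕ} {s : ℕ → Node} (h : IsPath ℓ m s) {B B' : Node}
    (hB : Add ℓ s m B) (hB' : Add ℓ s m B') (e : B.1 = B'.1) (e' : off B = off B' + 1) :
    False := by
  unfold off at e'
  rcases lt_or_ge B.2.1 B'.2.1 with h1 | h1
  · obtain ⟨j, hj, ej⟩ := hB'.up (B'.2.1 - 1) (by omega)
    exact hB.not_le h hj (by rw [ej]; exact e) (by rw [ej]; simp only; omega)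
      (by rw [ej]; simp only; omega)
  · obtain ⟨j, hj, ej⟩ := hB.left (B.2.2 - 1) (by omega)
    exact hB'.not_le h hj (by rw [ej]; exact e.symm) (by rw [ej]; simp only; omega)
      (by rw [ej]; simp only; omega)

theorem Add.q_inj {K : Type*} [Field K] {x : K} {n ℓ : ℕ} {κ : ℕ → ℤ} (S : Sep x n ℓ κ)
    {m : ℕ} {s : ℕ → Node} (h : IsPath ℓ m s) {B B' : Node} (hB : Add ℓ s m B)
    (hB' : Add ℓ s m B') (hm : m + 1 ≤ n)
    (e : qint x (cont κ B) = qint x (cont κ B')) : B = B' := by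
  obtain ⟨h1, h2⟩ := hB.compare S h hB' (δ := 0) (by simp; omega) (by simpa using e)
  exact hB.off_inj h hB' h1 (by simpa using h2)

theorem Add.q_nadj {K : Type*} [Field K] {x : K} {n ℓ : ℕ} {κ : ℕ → ℤ} (S : Sep x n ℓ κ)
    {m : ℕ} {s : ℕ → Node} (h : IsPath ℓ m s) {B B' : Node} (hB : Add ℓ s m B)
    (hB' : Add ℓ s m B') (hm : m + 2 ≤ n) {δ : ℤ} (hδ : δ = 1 ∨ δ = -1) :
    qint x (cont κ B) ≠ qint x (cont κ B' + δ) := by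
  intro e
  obtain ⟨h1, h2⟩ := hB.compare S h hB' (δ := δ)
    (by rcases hδ with rfl | rfl <;> simp <;> omega) e
  rcases hδ with rfl | rfl
  · exact hB.off_nadj h hB' h1 h2
  · exact hB'.off_nadj h hB h1.symm (by linarith)

/-- Paths are determined by their quantum contents. -/
theorem IsPath.q_inj {K : Type*} [Field K] {x : K} {n ℓ : ℕ} {κ : ℕ → ℤ} (S : Sep x n ℓ κ)
    {m : ℕ} {s s' : ℕ → Node} (h : IsPath ℓ m s) (h' : IsPath ℓ m s') (hm : m ≤ n)
    (e : ∀ k < m, qint x (cont κ (s k)) = qint x (cont κ (s' k))) : ∀ k < m, s k = s' k := by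
  intro k
  induction k using Nat.strong_induction_on with
  | _ k ih =>
    intro hk
    exact (h k hk).q_inj S (h.mono hk.le)
      ((h' k hk).congr fun j hj => (ih j hj (hj.trans hk)).symm) (by omega) (e k hk)

/-! Transposing nodes -/

/-- Exchange rows and columns. -/
def tr (x : Node) : Node := (x.1, x.2.2, x.2.1)

theorem tr_tr (x : Node) : tr (tr x) = x := rfl
theorem off_tr (x : Node) : off (tr x) = - off x := by simp [off, tr]

theorem Add.tr {ℓ m : ℕ} {s : ℕ → Node} {B : Node} (h : Add ℓ s m B) :
    Add ℓ (fun k => tr (s k)) m (tr B) where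
  comp := h.comp
  new j hj e := h.new j hj (by rw [← tr_tr (s j), e, tr_tr])
  up i hi := by
    obtain ⟨j, hj, e⟩ := h.left i hi
    exact ⟨j, hj, by simp only [e]; rfl⟩
  left i hi := by
    obtain ⟨j, hj, e⟩ := h.up i hi
    exact ⟨j, hj, by simp only [e]; rfl⟩

theorem IsPath.tr {ℓ m : ℕ} {s : ℕ → Node} (h : IsPath ℓ m s) :
    IsPath ℓ m (fun k => tr (s k)) := fun k hk => (h k hk).tr

/-- If the node to the right of the last node is not addable. -/
theorem IsPath.right {ℓ m : ℕ} {s : ℕ → Node} (h : IsPath ℓ (m + 1) s)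
    (hn : ¬ Add ℓ s (m + 1) ((s m).1, (s m).2.1, (s m).2.2 + 1)) :
    ∃ k < m, (s k).1 = (s m).1 ∧ off (s k) = off (s m) + 1 ∧
      ∀ j, k < j → j < m → (s j).1 = (s k).1 → |off (s j) - off (s k)| ≤ 1 → False := by
  have hnew : ∀ j < m + 1, s j ≠ ((s m).1, (s m).2.1, (s m).2.2 + 1) := by
    intro j hj e
    have := h.le_of_le (j := m) (k := j) (by omega) hj (by rw [e]) (by rw [e]) (by rw [e]; simp)
    have hjm : j = m := by omega
    rw [hjm] at e
    have := congrArg (fun x : Node => x.2.2) e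
    simp at this
  have hup : ∃ i, (s m).2.1 = i + 1 ∧ ∀ j < m + 1, s j ≠ ((s m).1, i, (s m).2.2 + 1) := by
    by_contra hc
    push Not at hc
    refine hn ⟨(h m (by omega)).comp, hnew, ?_, ?_⟩
    · intro i hi
      exact hc i hi
    · intro i hi
      refine ⟨m, by omega, ?_⟩
      have : (s m).2.2 = i := by simpa using hi
      rw [← this]
  obtain ⟨i, hi, hi'⟩ := hup
  obtain ⟨k, hk, ek⟩ := (h m (by omega)).up i hi
  have k1 : (s k).1 = (s m).1 := by rw [ek]
  have k2 : (s k).2.1 = i := by rw [ek]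
  have k3 : (s k).2.2 = (s m).2.2 := by rw [ek]
  refine ⟨k, hk, k1, ?_, ?_⟩
  · unfold off; rw [k2, k3]; omega
  · intro j hkj hjm e1 e2
    rw [abs_le] at e2
    unfold off at e2
    have A1 : ¬ ((s j).2.1 ≤ (s k).2.1 ∧ (s j).2.2 ≤ (s k).2.2) := by
      rintro ⟨a, b⟩
      have := h.le_of_le (j := j) (k := k) (by omega) (by omega) e1 a b
      omega
    have A2 : ¬ ((s m).2.1 ≤ (s j).2.1 ∧ (s m).2.2 ≤ (s j).2.2) := by
      rintro ⟨a, b⟩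
      have := h.le_of_le (j := m) (k := j) (by omega) (by omega) (by rw [e1, k1]) a b
      omega
    have A3 : ¬ (i ≤ (s j).2.1 ∧ (s m).2.2 + 1 ≤ (s j).2.2) := by
      rintro ⟨a, b⟩
      obtain ⟨j', hj', e⟩ := h.down j (by omega) _ _ a b
      exact hi' j' (by omega) (by rw [e, e1, k1])
    omega

theorem IsPath.below {ℓ m : ℕ} {s : ℕ → Node} (h : IsPath ℓ (m + 1) s)
    (hn : ¬ Add ℓ s (m + 1) ((s m).1, (s m).2.1 + 1, (s m).2.2)) :
    ∃ k < m, (s k).1 = (s m).1 ∧ off (s k) = off (s m) + -1 ∧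
      ∀ j, k < j → j < m → (s j).1 = (s k).1 → |off (s j) - off (s k)| ≤ 1 → False := by
  obtain ⟨k, hk, h1, h2, h3⟩ := h.tr.right (fun hc => hn (hc.tr))
  simp only [off_tr] at h2 h3
  refine ⟨k, hk, h1, by linarith, fun j hkj hjm e1 e2 => h3 j hkj hjm e1 ?_⟩
  rwa [← abs_neg, show -(-off (s j) - -off (s k)) = off (s j) - off (s k) by ring]

/-- Swapping consecutive entries of a path which are not neighbours. -/
theorem IsPath.swap {ℓ m : ℕ} {s : ℕ → Node} (h : IsPath ℓ m s) {r : ℕ} (hr : r + 1 < m)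
    (ha : Add ℓ s r (s (r + 1))) : IsPath ℓ m (fun k => s (Equiv.swap r (r + 1) k)) := by
  have sw : ∀ j, j ≠ r → j ≠ r + 1 → Equiv.swap r (r + 1) j = j := fun j h1 h2 =>
    Equiv.swap_apply_of_ne_of_ne h1 h2
  intro k hk
  rcases lt_trichotomy k r with h1 | h1 | h1
  · simp only [sw k (by omega) (by omega)]
    exact (h k hk).congr fun j hj => by rw [sw j (by omega) (by omega)]
  · subst h1
    simp only [Equiv.swap_apply_left]
    exact ha.congr fun j hj => by rw [sw j (by omega) (by omega)]
  · by_cases h2 : k = r + 1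
    · subst h2
      simp only [Equiv.swap_apply_right]
      refine Add.step ((h r (by omega)).congr fun j hj => by
        rw [sw j (by omega) (by omega)]) ?_
      simp only [Equiv.swap_apply_left]
      intro e
      have := h.inj (by omega) (by omega) e
      omega
    · have hs : ∀ j < k, Equiv.swap r (r + 1) j < k := by
        intro j hj
        rw [Equiv.swap_apply_def]
        split_ifs <;> omega
      simp only [sw k (by omega) h2]
      obtain ⟨a, b, c, d⟩ := h k hk
      refine ⟨a, fun j hj => b _ (hs j hj), fun i hi => ?_, fun i hi => ?_⟩
      · obtain ⟨j, hj, e⟩ := c i hi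
        exact ⟨_, hs j hj, by simpa using e⟩
      · obtain ⟨j, hj, e⟩ := d i hi
        exact ⟨_, hs j hj, by simpa using e⟩

/-- Consecutive entries of a path are swappable or neighbours. -/
theorem IsPath.consec {ℓ m : ℕ} {s : ℕ → Node} (h : IsPath ℓ m s) {r : ℕ} (hr : r + 1 < m) :
    Add ℓ s r (s (r + 1)) ∨ ((s (r + 1)).1 = (s r).1 ∧
      (off (s (r + 1)) = off (s r) + 1 ∨ off (s (r + 1)) = off (s r) + -1)) := by
  by_contra hc
  push Not at hc
  obtain ⟨h1, h2⟩ := hc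
  obtain ⟨a, b, c, d⟩ := h (r + 1) hr
  refine h1 ⟨a, fun j hj => b j (by omega), fun i hi => ?_, fun i hi => ?_⟩
  · obtain ⟨j, hj, e⟩ := c i hi
    rcases Nat.lt_succ_iff_lt_or_eq.mp hj with h' | rfl
    · exact ⟨j, h', e⟩
    · exact absurd (by rw [e]; simp only [off, hi]; push_cast; ring) (h2 (by rw [e])).2
  · obtain ⟨j, hj, e⟩ := d i hi
    rcases Nat.lt_succ_iff_lt_or_eq.mp hj with h' | rfl
    · exact ⟨j, h', e⟩
    · exact absurd (by rw [e]; simp only [off, hi]; push_cast; ring) (h2 (by rw [e])).1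


/-! ## Rank two computations -/

section rank2
variable {A : Type*} [Ring A] {X Y T c c' : A}

theorem alg_TY (hc : c' * c = 1) (cX : c * X = X * c) (cY : c * Y = Y * c) (cT : c * T = T * c)
    (q : T * T = (c - 1) * T + c) (lt : Y * T = T * X + 1 + (c - 1) * Y) :
    T * Y = X * T + 1 + (c - 1) * Y := by
  have h1 : c * Y = T * X * T + T := by
    linear_combination (norm := noncomm_ring) lt * T - Y * q + cY * T + cY
  have h2 : c * (T * Y) = c * (X * T + 1 + (c - 1) * Y) := by
    linear_combination (norm := noncomm_ring)
      cT * Y + T * h1 + q * (X * T) + q - (c - 1) * h1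
  calc T * Y = c' * (c * (T * Y)) := by rw [← mul_assoc, hc, one_mul]
    _ = _ := by rw [h2, ← mul_assoc, hc, one_mul]

theorem alg_YM (cX : c * X = X * c) (xy : X * Y = Y * X)
    (lt : Y * T = T * X + 1 + (c - 1) * Y) :
    Y * (T * X - X * T) = (T * X - X * T) * X := by
  linear_combination (norm := noncomm_ring) lt * X - X * lt + xy * T - c * xy + cX * Y + xy

theorem alg_XM (cX : c * X = X * c) (xy : X * Y = Y * X)
    (ty : T * Y = X * T + 1 + (c - 1) * Y) :
    X * (T * X - X * T) = (T * X - X * T) * Y := by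
  linear_combination (norm := noncomm_ring) X * ty - T * xy - ty * X - cX * Y + c * xy - xy

theorem alg_MM (cX : c * X = X * c) (cY : c * Y = Y * c) (cT : c * T = T * c)
    (xy : X * Y = Y * X) (q : T * T = (c - 1) * T + c)
    (lt : Y * T = T * X + 1 + (c - 1) * Y) (ty : T * Y = X * T + 1 + (c - 1) * Y) :
    (T * X - X * T) * (T * X - X * T) = (c * X - Y + 1) * (c * Y - X + 1) := by
  have hM : T * X - X * T = T * (X - Y) + ((c - 1) * Y + 1) := by
    linear_combination (norm := noncomm_ring) ty
  have h1 := alg_YM cX xy lt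
  have h2 := alg_XM cX xy ty
  have cM : c * (T * X - X * T) = (T * X - X * T) * c := by
    linear_combination (norm := noncomm_ring) cT * X + T * cX - cX * T - X * cT
  generalize T * X - X * T = M at *
  have h3 : M * M = T * M * (Y - X) + M * ((c - 1) * X + 1) := by
    linear_combination (norm := noncomm_ring) hM * M + T * h2 - T * h1 + (c - 1) * h1 + cM * X
  have h4 : T * M * (Y - X) = ((c - 1) * T + c) * (X - Y) * (Y - X)
      + T * ((c - 1) * Y + 1) * (Y - X) := by
    linear_combination (norm := noncomm_ring) T * hM * (Y - X) + q * (X - Y) * (Y - X)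
  have xc := cX.symm
  have yc := cY.symm
  have tc := cT.symm
  have yx := xy.symm
  have xc' : ∀ z, X * (c * z) = c * (X * z) := fun z => by rw [← mul_assoc, xc, mul_assoc]
  have yc' : ∀ z, Y * (c * z) = c * (Y * z) := fun z => by rw [← mul_assoc, yc, mul_assoc]
  have tc' : ∀ z, T * (c * z) = c * (T * z) := fun z => by rw [← mul_assoc, tc, mul_assoc]
  have yx' : ∀ z, Y * (X * z) = X * (Y * z) := fun z => by rw [← mul_assoc, yx, mul_assoc]
  rw [h3, h4, hM]
  simp only [mul_add, add_mul, mul_sub, sub_mul, mul_assoc, mul_one, one_mul, xc, yc, tc, yx,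
    xc', yc', tc', yx']
  abel
end rank2

/-! ## Abstract cyclotomic Hecke data -/

open Polynomial in
/-- Elements satisfying the cyclotomic Hecke relations, indexed by naturals. -/
structure HD {K : Type*} [Field K] (x : K) (n ℓ : ℕ) (κ : ℕ → ℤ) {A : Type*} [Ring A]
    [Algebra K A] (L T : ℕ → A) : Prop where
  cyc : 0 < n → aeval (L 0) (∏ l ∈ Finset.range ℓ, (X - C (qint x (κ l)))) = 0
  quad : ∀ r, r + 1 < n → T r * T r = (algebraMap K A x - 1) * T r + algebraMap K A x
  LL : ∀ j k, j < n → k < n → L j * L k = L k * L j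
  braid : ∀ r, r + 2 < n → T r * T (r + 1) * T r = T (r + 1) * T r * T (r + 1)
  TL : ∀ r k, r + 1 < n → k < n → k ≠ r → k ≠ r + 1 → T r * L k = L k * T r
  LT : ∀ r, r + 1 < n → L (r + 1) * T r = T r * L r + 1 + (algebraMap K A x - 1) * L (r + 1)

section abs
variable {K : Type*} [Field K] {x : K} {n ℓ : ℕ} {κ : ℕ → ℤ} {A : Type*} [Ring A]
    [Algebra K A] {L T : ℕ → A}

/-- The intertwiner. -/
def MM (L T : ℕ → A) (r : ℕ) : A := T r * L r - L r * T r

theorem HD.TY (H : HD x n ℓ κ L T) (hx : x ≠ 0) {r : ℕ} (hr : r + 1 < n) :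
    T r * L (r + 1) = L r * T r + 1 + (algebraMap K A x - 1) * L (r + 1) :=
  alg_TY (c' := algebraMap K A x⁻¹) (by rw [← map_mul, inv_mul_cancel₀ hx, map_one])
    (Algebra.commutes _ _) (Algebra.commutes _ _) (Algebra.commutes _ _) (H.quad r hr) (H.LT r hr)

theorem HD.YM (H : HD x n ℓ κ L T) {r : ℕ} (hr : r + 1 < n) :
    L (r + 1) * MM L T r = MM L T r * L r :=
  alg_YM (Algebra.commutes x _) (H.LL _ _ (by omega) (by omega)) (H.LT r hr)

theorem HD.XM (H : HD x n ℓ κ L T) (hx : x ≠ 0) {r : ℕ} (hr : r + 1 < n) :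
    L r * MM L T r = MM L T r * L (r + 1) :=
  alg_XM (Algebra.commutes x _) (H.LL _ _ (by omega) (by omega)) (H.TY hx hr)

theorem HD.MM_mul (H : HD x n ℓ κ L T) (hx : x ≠ 0) {r : ℕ} (hr : r + 1 < n) :
    MM L T r * MM L T r = (algebraMap K A x * L r - L (r + 1) + 1) *
      (algebraMap K A x * L (r + 1) - L r + 1) :=
  alg_MM (Algebra.commutes x _) (Algebra.commutes x _) (Algebra.commutes x _)
    (H.LL _ _ (by omega) (by omega)) (H.quad r hr) (H.LT r hr) (H.TY hx hr)

theorem HD.LM (H : HD x n ℓ κ L T) {r k : ℕ} (hr : r + 1 < n) (hk : k < n) (h1 : k ≠ r)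
    (h2 : k ≠ r + 1) : L k * MM L T r = MM L T r * L k := by
  have a := H.TL r k hr hk h1 h2
  have b := H.LL k r hk (by omega)
  unfold MM
  linear_combination (norm := noncomm_ring) -(a * L r) + T r * b - b * T r + L r * a

/-- Simultaneous eigenvectors. -/
def Eig (L : ℕ → A) (m : ℕ) (lam : ℕ → K) (v : A) : Prop := ∀ k < m, L k * v = lam k • v

theorem HD.Eig_MM (H : HD x n ℓ κ L T) (hx : x ≠ 0) {r m : ℕ} (hr : r + 1 < m) (hm : m ≤ n)
    {lam : ℕ → K} {v : A} (hv : Eig L m lam v) :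
    Eig L m (fun k => lam (Equiv.swap r (r + 1) k)) (MM L T r * v) := by
  intro k hk
  by_cases h1 : k = r
  · subst h1
    simp only [Equiv.swap_apply_left]
    rw [← mul_assoc, H.XM hx (by omega), mul_assoc, hv _ hr, mul_smul_comm]
  · by_cases h2 : k = r + 1
    · subst h2
      simp only [Equiv.swap_apply_right]
      rw [← mul_assoc, H.YM (by omega), mul_assoc, hv _ (by omega), mul_smul_comm]
    · simp only [Equiv.swap_apply_of_ne_of_ne h1 h2]
      rw [← mul_assoc, H.LM (by omega) (by omega) h1 h2, mul_assoc, hv _ hk, mul_smul_comm]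

theorem Eig.congr {m : ℕ} {lam lam' : ℕ → K} {v : A} (hv : Eig L m lam v)
    (e : ∀ k < m, lam k = lam' k) : Eig L m lam' v := fun k hk => by rw [← e k hk]; exact hv k hk

theorem Eig.mono {m m' : ℕ} {lam : ℕ → K} {v : A} (hv : Eig L m lam v) (h : m' ≤ m) :
    Eig L m' lam v := fun k hk => hv k (hk.trans_le h)

/-- Explicit form of the intertwiner on an eigenvector. -/
theorem HD.MM_apply (H : HD x n ℓ κ L T) (hx : x ≠ 0) {r : ℕ} (hr : r + 1 < n) {a b : K} {v : A}
    (h1 : L r * v = a • v) (h2 : L (r + 1) * v = b • v) :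
    MM L T r * v = (a - b) • (T r * v) + ((x - 1) * b + 1) • v := by
  have h3 : MM L T r = T r * L r - T r * L (r + 1) + (1 + (algebraMap K A x - 1) * L (r + 1)) := by
    have := H.TY hx hr
    unfold MM
    linear_combination (norm := noncomm_ring) this
  rw [h3, add_mul, sub_mul, mul_assoc, mul_assoc, h1, h2, add_mul, mul_assoc, h2, sub_mul,
    ← Algebra.smul_def, mul_smul_comm, mul_smul_comm]
  simp only [one_mul]
  module

theorem HD.MM_sq (H : HD x n ℓ κ L T) (hx : x ≠ 0) {r : ℕ} (hr : r + 1 < n) {a b : K} {v : A}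
    (h1 : L r * v = a • v) (h2 : L (r + 1) * v = b • v) :
    MM L T r * (MM L T r * v) = ((x * a - b + 1) * (x * b - a + 1)) • v := by
  have e1 : (algebraMap K A x * L (r + 1) - L r + 1) * v = (x * b - a + 1) • v := by
    rw [add_mul, sub_mul, mul_assoc, h1, h2, ← Algebra.smul_def]
    simp only [one_mul]; module
  have e2 : (algebraMap K A x * L r - L (r + 1) + 1) * v = (x * a - b + 1) • v := by
    rw [add_mul, sub_mul, mul_assoc, h1, h2, ← Algebra.smul_def]
    simp only [one_mul]; module
  rw [← mul_assoc, H.MM_mul hx hr, mul_assoc, e1, mul_smul_comm, e2]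
  module

/-! ### Polynomials acting on eigenvectors -/
open Polynomial

theorem aeval_eig {a v : A} {y : K} (h : a * v = y • v) (p : K[X]) :
    aeval a p * v = p.eval y • v := by
  induction p using Polynomial.induction_on' with
  | add p q hp hq => rw [map_add, add_mul, hp, hq, eval_add, add_smul]
  | monomial k c =>
    have hk : a ^ k * v = y ^ k • v := by
      induction k with
      | zero => simp
      | succ k ih => rw [pow_succ, mul_assoc, h, mul_smul_comm, ih, smul_smul]; ring_nf
    rw [aeval_monomial, mul_assoc, hk, eval_monomial, ← Algebra.smul_def, smul_smul]

theorem aeval_intertwine {a a' b : A} (h : b * a = a' * b) (p : K[X]) :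
    b * aeval a p = aeval a' p * b := by
  induction p using Polynomial.induction_on' with
  | add p q hp hq => rw [map_add, mul_add, hp, hq, map_add, add_mul]
  | monomial k c =>
    have hk : b * a ^ k = a' ^ k * b := by
      induction k with
      | zero => simp
      | succ k ih => rw [pow_succ, ← mul_assoc, ih, mul_assoc, h, ← mul_assoc, ← pow_succ]
    rw [aeval_monomial, aeval_monomial, ← mul_assoc, ← Algebra.commutes, mul_assoc, hk, mul_assoc]

/-- Squarefree annihilators force semisimplicity. -/
theorem ss_of_prod {a v : A} {R : Finset K} (h : aeval a (∏ ρ ∈ R, (X - C ρ)) * v = 0) {y : K}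
    {u : A} (hu : u = a * v - y • v) (h2 : a * u = y • u) : u = 0 := by
  have hdvd : (∏ ρ ∈ R, (X - C ρ)) ∣ (∏ ρ ∈ R.erase y, (X - C ρ)) * (X - C y) := by
    by_cases hy : y ∈ R
    · rw [mul_comm, Finset.mul_prod_erase R (fun ρ => X - C ρ) hy]
    · rw [Finset.erase_eq_of_notMem hy]; exact Dvd.intro _ rfl
  obtain ⟨g, hg⟩ := hdvd
  have h0 : aeval a ((∏ ρ ∈ R.erase y, (X - C ρ)) * (X - C y)) * v = 0 := by
    rw [hg, mul_comm, map_mul, mul_assoc, h, mul_zero]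
  have hu' : aeval a (X - C y) * v = u := by
    rw [hu, map_sub, aeval_X, aeval_C, sub_mul, ← Algebra.smul_def]
  rw [map_mul, mul_assoc, hu', aeval_eig h2] at h0
  refine (smul_eq_zero.mp h0).resolve_left ?_
  rw [eval_prod]; refine Finset.prod_ne_zero_iff.mpr ?_
  intro ρ hρ
  simp only [eval_sub, eval_X, eval_C]
  exact sub_ne_zero.mpr (Finset.ne_of_mem_erase hρ).symm

/-- Decomposition into eigenvectors. -/
theorem decomp {a v : A} {R : Finset K} (h : aeval a (∏ ρ ∈ R, (X - C ρ)) * v = 0) :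
    ∃ p : K → K[X], v = ∑ ρ ∈ R, aeval a (p ρ) * v ∧
      ∀ ρ ∈ R, a * (aeval a (p ρ) * v) = ρ • (aeval a (p ρ) * v) := by
  refine ⟨fun ρ => Lagrange.basis R id ρ, ?_, ?_⟩
  · rcases R.eq_empty_or_nonempty with rfl | hR
    · simpa using h
    · rw [← Finset.sum_mul, ← map_sum, Lagrange.sum_basis (Function.injective_id.injOn) hR]
      simp
  · intro ρ hρ
    have e : (X - C ρ) * Lagrange.basis R id ρ =
        (∏ j ∈ R.erase ρ, C (ρ - j)⁻¹) * ∏ j ∈ R, (X - C j) := by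
      unfold Lagrange.basis Lagrange.basisDivisor
      rw [Finset.prod_mul_distrib, mul_left_comm, ← Finset.mul_prod_erase R (fun j => X - C j) hρ]
      rfl
    have h0 : aeval a ((X - C ρ) * Lagrange.basis R id ρ) * v = 0 := by
      rw [e, map_mul, mul_assoc, h, mul_zero]
    rw [map_mul, map_sub, aeval_X, aeval_C, mul_assoc, sub_mul, ← Algebra.smul_def] at h0
    exact sub_eq_zero.mp h0

end abs
section abs2
open Polynomial
variable {K : Type*} [Field K] {x : K} {n ℓ : ℕ} {κ : ℕ → ℤ} {A : Type*} [Ring A]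
    [Algebra K A] {L T : ℕ → A}

/-- Quantum contents of a sequence of nodes. -/
noncomputable def qc (x : K) (κ : ℕ → ℤ) (s : ℕ → Node) (k : ℕ) : K := qint x (cont κ (s k))

/-- The branching statement at level `m`. -/
def Branch (x : K) (ℓ : ℕ) (κ : ℕ → ℤ) (L : ℕ → A) (m : ℕ) : Prop :=
  ∀ s, IsPath ℓ m s → ∃ R : Finset K, (∀ ρ ∈ R, ∃ B, Add ℓ s m B ∧ ρ = qint x (cont κ B)) ∧
    ∀ v, Eig L m (qc x κ s) v → aeval (L m) (∏ ρ ∈ R, (X - C ρ)) * v = 0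

theorem weight_path {m : ℕ} (Q : ∀ j < m, Branch x ℓ κ L j) {lam : ℕ → K} {v : A}
    (hv : Eig L m lam v) (h0 : v ≠ 0) :
    ∃ s, IsPath ℓ m s ∧ ∀ k < m, lam k = qc x κ s k := by
  induction m with
  | zero => exact ⟨fun _ => (0, 0, 0), fun k hk => by omega, fun k hk => by omega⟩
  | succ m ih =>
    obtain ⟨s, hs, e⟩ := ih (fun j hj => Q j (by omega)) (hv.mono (by omega))
    obtain ⟨R, hR, hk⟩ := Q m (by omega) s hs
    have h1 := hk v ((hv.mono (by omega)).congr e)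
    rw [aeval_eig (hv m (by omega))] at h1
    have h2 := (smul_eq_zero.mp h1).resolve_right h0
    rw [eval_prod, Finset.prod_eq_zero_iff] at h2
    obtain ⟨ρ, hρ, h3⟩ := h2
    simp only [eval_sub, eval_X, eval_C] at h3
    obtain ⟨B, hB, eB⟩ := hR ρ hρ
    refine ⟨Function.update s m B, hs.ext hB, fun k hk => ?_⟩
    unfold qc
    rcases Nat.lt_succ_iff_lt_or_eq.mp hk with h' | rfl
    · rw [Function.update_of_ne (by omega)]; exact e k h'
    · rw [Function.update_self, ← eB]; exact sub_eq_zero.mp h3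

theorem cont_eq_of {B B' : Node} {δ : ℤ} (h1 : B.1 = B'.1) (h2 : off B = off B' + δ) :
    cont κ B = cont κ B' + δ := by
  unfold cont; unfold off at h2; rw [h1]; linarith

theorem nonstd (S : Sep x n ℓ κ) {m r : ℕ} (Q : ∀ j < m, Branch x ℓ κ L j) (hm : m ≤ n)
    (hr : r + 1 < m) {s : ℕ → Node} (hs : IsPath ℓ m s) {δ : ℤ} (hδ : δ = 1 ∨ δ = -1)
    (h1 : (s (r + 1)).1 = (s r).1) (h2 : off (s (r + 1)) = off (s r) + δ) {u : A}
    (hu : Eig L m (fun k => qc x κ s (Equiv.swap r (r + 1) k)) u) : u = 0 := by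
  by_contra h0
  obtain ⟨s', hs', e⟩ := weight_path Q hu h0
  have e1 : ∀ k < r, s' k = s k := by
    refine (hs'.mono (by omega)).q_inj S (hs.mono (by omega)) (by omega) fun k hk => ?_
    have := e k (by omega)
    rw [Equiv.swap_apply_of_ne_of_ne (by omega) (by omega)] at this
    exact this.symm
  have h3 := e r (by omega)
  simp only [Equiv.swap_apply_left, qc] at h3
  rw [cont_eq_of h1 h2] at h3
  exact ((hs' r (by omega)).congr e1).q_nadj S (hs.mono (by omega)) (hs r (by omega))
    (by omega) hδ h3.symm

theorem excl_same (S : Sep x n ℓ κ) (H : HD x n ℓ κ L T) {m : ℕ} (Q : Branch x ℓ κ L m)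
    (hm : m + 1 < n) {s : ℕ → Node} (hs : IsPath ℓ m s) {v : A} (hv : Eig L m (qc x κ s) v)
    {a : ℤ} (h1 : L m * v = qint x a • v) (h2 : L (m + 1) * v = qint x a • v) : v = 0 := by
  obtain ⟨R, hR, hk⟩ := Q s hs
  have hT : Eig L m (qc x κ s) (T m * v) := by
    intro k hk
    rw [← mul_assoc, ← H.TL m k hm (by omega) (by omega) (by omega), mul_assoc, hv k hk,
      mul_smul_comm]
  have e : L m * (T m * v) - qint x a • (T m * v) = -(x ^ a) • v := by
    have h3 := congrArg (· * v) (H.TY S.ne hm)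
    simp only [add_mul, sub_mul, mul_assoc, one_mul, h2, mul_smul_comm] at h3
    rw [h3, ← Algebra.smul_def, ← qint_D S.ne]
    module
  have h4 := ss_of_prod (hk _ hT) (y := qint x a) e.symm (by rw [mul_smul_comm, h1, smul_comm])
  refine (smul_eq_zero.mp h4).resolve_left ?_
  exact neg_ne_zero.mpr (zpow_ne_zero _ S.ne)

theorem excl_adj (S : Sep x n ℓ κ) (H : HD x n ℓ κ L T) (d : ℕ) :
    ∀ {m k : ℕ} {s : ℕ → Node} {δ : ℤ} {v : A}, (∀ j ≤ m, Branch x ℓ κ L j) → m + 1 < n →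
      m = k + 1 + d → IsPath ℓ (m + 1) s → (δ = 1 ∨ δ = -1) → (s k).1 = (s m).1 →
      off (s k) = off (s m) + δ →
      (∀ j, k < j → j < m → (s j).1 = (s k).1 → |off (s j) - off (s k)| ≤ 1 → False) →
      Eig L (m + 1) (qc x κ s) v → L (m + 1) * v = qint x (cont κ (s m) + δ) • v → v = 0 := by
  induction d with
  | zero =>
    intro m k s δ v Q hm hmk hs hδ e1 e2 _ hv hv'
    obtain rfl : m = k + 1 := by omega
    have ck := cont_eq_of (κ := κ) e1 e2
    have hk1 := hv k (by omega)
    have hk2 := hv (k + 1) (by omega)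
    simp only [qc] at hk1 hk2
    rw [ck] at hk1
    have M1 : MM L T k * v = 0 := by
      refine nonstd S (fun j hj => Q j (by omega)) (by omega) (by omega) hs (δ := -δ)
        (by rcases hδ with rfl | rfl <;> simp) e1.symm (by linarith)
        (H.Eig_MM S.ne (by omega) (by omega) hv)
    have M2 : MM L T (k + 1) * v = 0 := by
      have hv2 : Eig L (k + 1 + 2) (fun j => if j = k + 2 then qint x (cont κ (s (k + 1)) + δ)
          else qc x κ s j) v := by
        intro j hj
        by_cases hj2 : j = k + 2
        · subst hj2; simpa using hv'
        · simp only [hj2, if_false]; exact hv j (by omega)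
      have hE := H.Eig_MM S.ne (r := k + 1) (by omega) (by omega) hv2
      refine excl_same S H (Q k (by omega)) (by omega) (hs.mono (by omega)) ?_
        (a := cont κ (s (k + 1)) + δ) ?_ ?_
      · refine (hE.mono (by omega : k ≤ k + 1 + 2)).congr fun j hj => ?_
        rw [Equiv.swap_apply_of_ne_of_ne (by omega) (by omega), if_neg (by omega)]
      · have := hE k (by omega)
        simp only at this
        rw [Equiv.swap_apply_of_ne_of_ne (by omega) (by omega), if_neg (by omega)] at this
        rwa [← ck]
      · have := hE (k + 1) (by omega)
        simp only [Equiv.swap_apply_left, if_true] at this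
        exact this
    rw [H.MM_apply S.ne (by omega) hk1 hk2, qint_D S.ne] at M1
    rw [H.MM_apply S.ne (by omega) hk2 hv', qint_D S.ne] at M2
    have x2 : x + 1 ≠ 0 := by
      have := S.one 2 (by norm_num) (by rw [abs_of_pos (by norm_num)]; omega)
      rw [show (2 : ℤ) = 1 + 1 by norm_num, qint_add_one S.ne, qint_one, mul_one] at this
      exact this
    have key : ∀ α β : K, α * β * (α - β) ≠ 0 → T k * v = α • v → T (k + 1) * v = β • v →
        v = 0 := by
      intro α β hne h1 h2
      have hb := congrArg (· * v) (H.braid k (by omega))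
      simp only [mul_assoc, h1, h2, mul_smul_comm, smul_smul] at hb
      refine (smul_eq_zero.mp (?_ : (α * β * (α - β)) • v = 0)).resolve_left hne
      rw [← sub_eq_zero, ← sub_smul] at hb
      rw [← hb]
      congr 1
      ring
    generalize cont κ (s (k + 1)) = a at *
    rcases hδ with rfl | rfl
    · rw [qint_succ S.ne] at M1 M2
      have ha := zpow_ne_zero a S.ne
      refine key (-1) x ?_ ?_ ?_
      · have : -1 * x * (-1 - x) = x * (x + 1) := by ring
        rw [this]; exact mul_ne_zero S.ne x2
      · apply smul_right_injective A ha
        simp only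
        rw [show qint x a + x ^ a - qint x a = x ^ a by ring] at M1
        rw [← sub_eq_zero, ← M1]; module
      · apply smul_right_injective A ha
        simp only
        rw [show qint x a - (qint x a + x ^ a) = -x ^ a by ring, zpow_add_one₀ S.ne] at M2
        rw [← sub_eq_zero, ← neg_eq_zero, ← M2]; module
    · obtain ⟨b, rfl⟩ : ∃ b, a = b + 1 := ⟨a - 1, by ring⟩
      rw [show b + 1 + -1 = b by ring, qint_succ S.ne] at M1 M2
      have hb := zpow_ne_zero b S.ne
      refine key x (-1) ?_ ?_ ?_
      · have : x * -1 * (x - -1) = -(x * (x + 1)) := by ring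
        rw [this]; exact neg_ne_zero.mpr (mul_ne_zero S.ne x2)
      · apply smul_right_injective A hb
        simp only
        rw [show qint x b - (qint x b + x ^ b) = -x ^ b by ring, zpow_add_one₀ S.ne] at M1
        rw [← sub_eq_zero, ← neg_eq_zero, ← M1]; module
      · apply smul_right_injective A hb
        simp only
        rw [show qint x b + x ^ b - qint x b = x ^ b by ring] at M2
        rw [← sub_eq_zero, ← M2]; module
  | succ d ih =>
    intro m k s δ v Q hm hmk hs hδ e1 e2 h3 hv hv'
    have hadd : Add ℓ s k (s (k + 1)) := by
      rcases hs.consec (r := k) (by omega) with h | ⟨h, h'⟩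
      · exact h
      · refine (h3 (k + 1) (by omega) (by omega) h ?_).elim
        rcases h' with h' | h' <;> rw [h'] <;> simp
    have hs' := hs.swap (r := k) (by omega) hadd
    have sw : ∀ j, j ≠ k → j ≠ k + 1 → Equiv.swap k (k + 1) j = j := fun j h1 h2 =>
      Equiv.swap_apply_of_ne_of_ne h1 h2
    have hE := H.Eig_MM S.ne (r := k) (by omega) (by omega) hv
    have M0 : MM L T k * v = 0 := by
      refine ih (m := m) (k := k + 1) (δ := δ) Q hm (by omega) hs' hδ ?_ ?_ ?_ hE ?_
      · simp only [Equiv.swap_apply_right, sw m (by omega) (by omega)]; exact e1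
      · simp only [Equiv.swap_apply_right, sw m (by omega) (by omega)]; exact e2
      · intro j hj hj'
        simp only [Equiv.swap_apply_right, sw j (by omega) (by omega)]
        exact h3 j (by omega) hj'
      · simp only [sw m (by omega) (by omega)]
        rw [← mul_assoc, H.LM (by omega) (by omega) (by omega) (by omega), mul_assoc, hv',
          mul_smul_comm]
    have h4 := H.MM_sq S.ne (r := k) (by omega) (hv k (by omega)) (hv (k + 1) (by omega))
    rw [M0, mul_zero] at h4
    refine (smul_eq_zero.mp h4.symm).resolve_left ?_
    simp only [qc]
    have hx := qint_add_one S.ne (cont κ (s k))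
    have hy := qint_add_one S.ne (cont κ (s (k + 1)))
    apply mul_ne_zero
    · intro h0
      obtain ⟨f1, f2⟩ := hs.compare S (j := k + 1) (k := k) (by omega) (by omega) (δ := 1)
        (by simp; omega) (by rw [hx]; linear_combination -h0)
      exact h3 (k + 1) (by omega) (by omega) f1 (by rw [f2]; simp)
    · intro h0
      obtain ⟨f1, f2⟩ := hs.compare S (j := k) (k := k + 1) (by omega) (by omega) (δ := 1)
        (by simp; omega) (by rw [hy]; linear_combination -h0)
      exact h3 (k + 1) (by omega) (by omega) f1.symm (by rw [f2]; simp)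

theorem branch_zero (S : Sep x n ℓ κ) (H : HD x n ℓ κ L T) (hn : 0 < n) :
    Branch x ℓ κ L 0 := by
  intro s _
  refine ⟨(Finset.range ℓ).image fun l => qint x (κ l), ?_, ?_⟩
  · intro ρ hρ
    obtain ⟨l, hl, rfl⟩ := Finset.mem_image.mp hρ
    refine ⟨(l, 0, 0), ⟨Finset.mem_range.mp hl, fun j hj => by omega, ?_, ?_⟩, by simp [cont]⟩
    · intro i hi; simp at hi
    · intro i hi; simp at hi
  · intro v _
    rw [Finset.prod_image, H.cyc hn, zero_mul]
    intro l hl m hm e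
    by_contra hne
    simp only at e
    rw [qint_eq_iff S.ne] at e
    refine S.two l m (Finset.mem_range.mp hl) (Finset.mem_range.mp hm) hne 0 (by simpa) ?_
    simpa using e

theorem branch_succ (S : Sep x n ℓ κ) (H : HD x n ℓ κ L T) {m : ℕ} (hm : m + 1 < n)
    (Q : ∀ j ≤ m, Branch x ℓ κ L j) : Branch x ℓ κ L (m + 1) := by
  intro s hs
  have hs0 : IsPath ℓ m s := hs.mono (by omega)
  have hA := hs m (by omega)
  obtain ⟨R, hR, hk⟩ := Q m le_rfl s hs0
  set a := cont κ (s m) with ha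
  set F : Finset K := insert (qint x (a + 1)) (insert (qint x (a + -1)) R) with hF
  have n2 : qint x (a + -1) ∉ R := fun h => by
    obtain ⟨B, hB, e⟩ := hR _ h
    exact hB.q_nadj S hs0 hA (by omega) (Or.inr rfl) e.symm
  have n1 : qint x (a + 1) ∉ insert (qint x (a + -1)) R := fun h => by
    rcases Finset.mem_insert.mp h with h | h
    · rw [qint_eq_iff S.ne] at h
      refine S.one _ ?_ ?_ h
      · ring_nf; norm_num
      · rw [show a + 1 - (a + -1) = 2 by ring, abs_of_pos (by norm_num)]; omega
    · obtain ⟨B, hB, e⟩ := hR _ h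
      exact hB.q_nadj S hs0 hA (by omega) (Or.inl rfl) e.symm
  have kill : ∀ v, Eig L (m + 1) (qc x κ s) v →
      aeval (L (m + 1)) (∏ ρ ∈ F, (X - C ρ)) * v = 0 := by
    intro v hv
    rw [hF, Finset.prod_insert n1, Finset.prod_insert n2, map_mul, map_mul, mul_assoc, mul_assoc]
    set q := ∏ ρ ∈ R, (X - C ρ)
    set w := aeval (L (m + 1)) q * v with hw
    have h1 : L m * w = qint x a • w := by
      rw [hw, ← mul_assoc, aeval_intertwine (H.LL m (m + 1) (by omega) (by omega)), mul_assoc,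
        hv m (by omega), mul_smul_comm]
      rfl
    have h2 : MM L T m * w = 0 := by
      rw [hw, ← mul_assoc, aeval_intertwine (H.XM S.ne hm).symm, mul_assoc]
      apply hk
      intro k hk'
      rw [← mul_assoc, H.LM hm (by omega) (by omega) (by omega), mul_assoc, hv k (by omega),
        mul_smul_comm]
    have h3 := congrArg (· * w) (H.MM_mul S.ne hm)
    have hxa : x * qint x a = qint x (a + 1) - 1 := by rw [qint_add_one S.ne]; ring
    have hxa' : qint x a = x * qint x (a + -1) + 1 := by
      rw [← qint_add_one S.ne]; congr 1; ring
    have hYw : (algebraMap K A x * L (m + 1) - L m + 1) * w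
        = x • (aeval (L (m + 1)) (X - C (qint x (a + -1))) * w) := by
      rw [map_sub, aeval_X, aeval_C, add_mul, sub_mul, h1, mul_assoc, ← Algebra.smul_def,
        sub_mul, ← Algebra.smul_def, hxa', one_mul]
      module
    rw [mul_assoc, h2, mul_zero, mul_assoc, hYw] at h3
    set u := aeval (L (m + 1)) (X - C (qint x (a + -1))) * w with hu
    have h1u : L m * u = qint x a • u := by
      rw [hu, ← mul_assoc, aeval_intertwine (H.LL m (m + 1) (by omega) (by omega)), mul_assoc,
        h1, mul_smul_comm]
    rw [mul_smul_comm] at h3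
    have h4 := (smul_eq_zero.mp h3.symm).resolve_left S.ne
    rw [add_mul, sub_mul, mul_assoc, h1u, ← Algebra.smul_def, smul_smul, hxa, one_mul] at h4
    rw [map_sub, aeval_X, aeval_C, sub_mul, ← Algebra.smul_def, ← neg_eq_zero, ← h4]
    module
  refine ⟨F.filter fun ρ => ∃ B, Add ℓ s (m + 1) B ∧ ρ = qint x (cont κ B),
    fun ρ hρ => (Finset.mem_filter.mp hρ).2, fun v hv => ?_⟩
  obtain ⟨p, hp, hp'⟩ := decomp (kill v hv)
  rw [hp, Finset.mul_sum]
  refine Finset.sum_eq_zero fun ρ hρ => ?_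
  have hY := hp' ρ hρ
  have hE : Eig L (m + 1) (qc x κ s) (aeval (L (m + 1)) (p ρ) * v) := by
    intro k hk
    rw [← mul_assoc, aeval_intertwine (H.LL k (m + 1) (by omega) (by omega)), mul_assoc,
      hv k hk, mul_smul_comm]
  generalize aeval (L (m + 1)) (p ρ) * v = w at hY hE
  by_cases hl : ∃ B, Add ℓ s (m + 1) B ∧ ρ = qint x (cont κ B)
  · rw [aeval_eig hY, eval_prod, Finset.prod_eq_zero (Finset.mem_filter.mpr ⟨hρ, hl⟩) (by simp),
      zero_smul]
  · suffices w = 0 by rw [this, mul_zero]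
    rcases Finset.mem_insert.mp hρ with h | h
    · subst h
      have hn : ¬ Add ℓ s (m + 1) ((s m).1, (s m).2.1, (s m).2.2 + 1) := fun hc =>
        hl ⟨_, hc, by congr 1; simp only [ha, cont]; push_cast; ring⟩
      obtain ⟨k, hk, e1, e2, e3⟩ := hs.right hn
      exact excl_adj S H (m - (k + 1)) Q hm (by omega) hs (Or.inl rfl) e1 e2 e3 hE hY
    rcases Finset.mem_insert.mp h with h | h
    · subst h
      have hn : ¬ Add ℓ s (m + 1) ((s m).1, (s m).2.1 + 1, (s m).2.2) := fun hc =>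
        hl ⟨_, hc, by congr 1; simp only [ha, cont]; push_cast; ring⟩
      obtain ⟨k, hk, e1, e2, e3⟩ := hs.below hn
      exact excl_adj S H (m - (k + 1)) Q hm (by omega) hs (Or.inr rfl) e1 e2 e3 hE hY
    · obtain ⟨B, hB, e⟩ := hR _ h
      by_cases hBA : s m = B
      · subst hBA
        exact excl_same S H (Q m le_rfl) hm hs0 (hE.mono (by omega)) (hE m (by omega))
          (by rw [hY, e])
      · exact (hl ⟨B, hB.step hBA, e⟩).elim

theorem branch_all (S : Sep x n ℓ κ) (H : HD x n ℓ κ L T) : ∀ m < n, Branch x ℓ κ L m := by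
  intro m
  induction m using Nat.strong_induction_on with
  | _ m ih =>
    intro hm
    cases m with
    | zero => exact branch_zero S H hm
    | succ m => exact branch_succ S H hm fun j hj => ih j (by omega) (by omega)

/-- The algebra is spanned by weight vectors of paths. -/
theorem span_paths (S : Sep x n ℓ κ) (H : HD x n ℓ κ L T) :
    ∀ m ≤ n, ∀ v : A,
      v ∈ Submodule.span K {w : A | ∃ s, IsPath ℓ m s ∧ Eig L m (qc x κ s) w} := by
  intro m
  induction m with
  | zero =>
    intro _ v
    exact Submodule.subset_span ⟨fun _ => (0, 0, 0), fun k hk => by omega, fun k hk => by omega⟩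
  | succ m ih =>
    intro hm v
    refine Submodule.span_le.mpr ?_ (ih (by omega) v)
    rintro v ⟨s, hs, hv⟩
    obtain ⟨R, hR, hk⟩ := branch_all S H m (by omega) s hs
    obtain ⟨p, hp, hp'⟩ := decomp (hk v hv)
    rw [hp]
    refine Submodule.sum_mem _ fun ρ hρ => Submodule.subset_span ?_
    obtain ⟨B, hB, e⟩ := hR ρ hρ
    refine ⟨Function.update s m B, hs.ext hB, fun k hk => ?_⟩
    unfold qc
    rcases Nat.lt_succ_iff_lt_or_eq.mp hk with h' | rfl
    · rw [Function.update_of_ne (by omega), ← mul_assoc,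
        aeval_intertwine (H.LL k m (by omega) (by omega)), mul_assoc, hv k h', mul_smul_comm]
      rfl
    · rw [Function.update_self, ← e]
      exact hp' ρ hρ

end abs2

/-! ### Standard tableaux and paths -/

section tab
variable {ℓ n : ℕ}

theorem StdTableau.node_spec (T : StdTableau ℓ n) {k : ℕ} (hk : k < n) :
    T.node (k + 1) ∈ T.shape.diagram ∧ T.entry (T.node (k + 1)) = k + 1 := by
  have h : ∃ A ∈ T.shape.diagram, T.entry A = k + 1 :=
    T.bijOn.surjOn (show k + 1 ∈ Set.Icc 1 n from ⟨by omega, by omega⟩)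
  exact ⟨Function.invFunOn_mem h, Function.invFunOn_eq h⟩

theorem StdTableau.node_entry (T : StdTableau ℓ n) {A : Node} (hA : A ∈ T.shape.diagram) :
    ∃ k < n, T.entry A = k + 1 ∧ T.node (k + 1) = A := by
  have h := T.bijOn.mapsTo hA
  have h1 : 1 ≤ T.entry A := h.1
  have h2 : T.entry A ≤ n := h.2
  refine ⟨T.entry A - 1, by omega, by omega, ?_⟩
  have h3 := T.node_spec (k := T.entry A - 1) (by omega)
  exact T.bijOn.injOn h3.1 hA (by rw [h3.2]; omega)

theorem StdTableau.isPath (T : StdTableau ℓ n) : IsPath ℓ n (fun k => T.node (k + 1)) := by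
  intro k hk
  obtain ⟨h1, h2⟩ := T.node_spec hk
  simp only
  generalize T.node (k + 1) = B at h1 h2
  obtain ⟨l, r, c⟩ := B
  have h1' : c < T.shape.part l r := h1
  refine ⟨?_, ?_, ?_, ?_⟩
  · by_contra hl
    rw [T.shape.comp_bound l (not_lt.mp hl) r] at h1'
    omega
  · intro j hj e
    have := (T.node_spec (k := j) (by omega)).2
    rw [e, h2] at this
    omega
  · rintro i hi
    have hi : r = i + 1 := hi
    subst hi
    have h3 : (l, i, c) ∈ T.shape.diagram :=
      lt_of_lt_of_le h1' (T.shape.antitone l (Nat.le_succ i))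
    obtain ⟨j, hj, e1, e2⟩ := T.node_entry h3
    have := T.col_inc l i c h1
    exact ⟨j, by omega, e2⟩
  · rintro i hi
    have hi : c = i + 1 := hi
    subst hi
    have h3 : (l, r, i) ∈ T.shape.diagram := lt_trans (Nat.lt_succ_self i) h1'
    obtain ⟨j, hj, e1, e2⟩ := T.node_entry h3
    have := T.row_inc l r i h1
    exact ⟨j, by omega, e2⟩

theorem StdTableau.ext_node {T T' : StdTableau ℓ n}
    (h : ∀ k < n, T.node (k + 1) = T'.node (k + 1)) : T = T' := by
  have hd : ∀ {U V : StdTableau ℓ n}, (∀ k < n, U.node (k + 1) = V.node (k + 1)) →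
      ∀ A, A ∈ U.shape.diagram → A ∈ V.shape.diagram ∧ U.entry A = V.entry A := by
    intro U V e A hA
    obtain ⟨k, hk, e1, e2⟩ := U.node_entry hA
    rw [← e2, e k hk]
    refine ⟨(V.node_spec hk).1, ?_⟩
    rw [(V.node_spec hk).2, ← e k hk, e2, e1]
  have h' : ∀ k < n, T'.node (k + 1) = T.node (k + 1) := fun k hk => (h k hk).symm
  have hp : T.shape.part = T'.shape.part := by
    funext l r
    apply le_antisymm
    · by_contra hc
      exact lt_irrefl (T'.shape.part l r) (hd h (l, r, T'.shape.part l r) (not_le.mp hc)).1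
    · by_contra hc
      exact lt_irrefl (T.shape.part l r) (hd h' (l, r, T.shape.part l r) (not_le.mp hc)).1
  have he : T.entry = T'.entry := by
    funext A
    by_cases hA : A ∈ T.shape.diagram
    · exact (hd h A hA).2
    · rw [T.entry_zero A hA, T'.entry_zero A fun hc => hA (hd h' A hc).1]
  obtain ⟨⟨p, _, _, _, _⟩, en, _, _, _, _⟩ := T
  obtain ⟨⟨p', _, _, _, _⟩, en', _, _, _, _⟩ := T'
  simp only at hp he
  subst hp he
  rfl

theorem IsPath.bound {m : ℕ} {s : ℕ → Node} (h : IsPath ℓ m s) {k : ℕ} (hk : k < m) :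
    (s k).1 < ℓ ∧ (s k).2.1 ≤ k ∧ (s k).2.2 ≤ k := by
  have h1 := (h.rowcount k hk).trans (Finset.card_filter_le _ _)
  have h2 := (h.tr.rowcount k hk).trans (Finset.card_filter_le _ _)
  rw [Finset.card_range] at h1 h2
  simp only [Paper.tr] at h2
  exact ⟨(h k hk).comp, by omega, by omega⟩

/-- Row lengths of the shape of a path. -/
noncomputable def rowLen (n : ℕ) (s : ℕ → Node) (l r : ℕ) : ℕ :=
  ((Finset.range n).filter fun k => ((s k).1, (s k).2.1) = (l, r)).card

theorem IsPath.lt_rowLen {s : ℕ → Node} (h : IsPath ℓ n s) (l r c : ℕ) :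
    c < rowLen n s l r ↔ ∃ k < n, s k = (l, r, c) := by
  have hc : rowLen n s l r = (((Finset.range n).filter
      fun k => ((s k).1, (s k).2.1) = (l, r)).image fun k => (s k).2.2).card := by
    unfold rowLen
    rw [Finset.card_image_of_injOn]
    intro j hj k hk e
    simp only [Finset.coe_filter, Finset.mem_range, Set.mem_ofPred_eq, Prod.mk.injEq] at hj hk
    refine h.inj hj.1 hk.1 (Prod.ext (hj.2.1.trans hk.2.1.symm)
      (Prod.ext (hj.2.2.trans hk.2.2.symm) e))
  have hm : ∀ c, c ∈ (((Finset.range n).filter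
      fun k => ((s k).1, (s k).2.1) = (l, r)).image fun k => (s k).2.2) ↔
      ∃ k < n, s k = (l, r, c) := by
    intro c
    simp only [Finset.mem_image, Finset.mem_filter, Finset.mem_range, Prod.mk.injEq]
    constructor
    · rintro ⟨k, ⟨hk, e1, e2⟩, e3⟩
      exact ⟨k, hk, Prod.ext e1 (Prod.ext e2 e3)⟩
    · rintro ⟨k, hk, e⟩
      exact ⟨k, ⟨hk, by rw [e], by rw [e]⟩, by rw [e]⟩
  have hdown : ∀ c c', c' ≤ c → (∃ k < n, s k = (l, r, c)) → ∃ k < n, s k = (l, r, c') := by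
    rintro c c' hcc ⟨k, hk, e⟩
    obtain ⟨j, hj, e'⟩ := h.down k hk r c' (by rw [e]) (by rw [e]; exact hcc)
    exact ⟨j, by omega, by rw [e', e]⟩
  rw [hc]
  constructor
  · intro hlt
    by_contra hn
    refine absurd hlt (not_lt.mpr ?_)
    conv_rhs => rw [← Finset.card_range c]
    refine Finset.card_le_card ?_
    intro b hb
    rw [Finset.mem_range]
    by_contra hbc
    exact hn (hdown b c (not_lt.mp hbc) ((hm b).mp hb))
  · intro hx
    have := Finset.card_le_card (s := Finset.range (c + 1)) (t := (((Finset.range n).filter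
      fun k => ((s k).1, (s k).2.1) = (l, r)).image fun k => (s k).2.2)) (by
        intro b hb
        rw [hm]
        exact hdown c b (by rw [Finset.mem_range] at hb; omega) hx)
    rw [Finset.card_range] at this
    omega

/-- The shape of a path. -/
noncomputable def IsPath.shape {s : ℕ → Node} (h : IsPath ℓ n s) : Multipartition ℓ n where
  part := rowLen n s
  comp_bound l hl r := by
    by_contra hc
    obtain ⟨k, hk, e⟩ := (h.lt_rowLen l r 0).mp (Nat.pos_of_ne_zero hc)
    have := (h.bound hk).1
    rw [e] at this
    simp only at this
    omega
  antitone l := by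
    intro r r' hr
    by_contra hc
    obtain ⟨k, hk, e⟩ := (h.lt_rowLen l r' _).mp (not_le.mp hc)
    obtain ⟨j, hj, e'⟩ := h.down k hk r (rowLen n s l r) (by rw [e]; exact hr) (by rw [e])
    exact lt_irrefl _ ((h.lt_rowLen l r (rowLen n s l r)).mpr ⟨j, by omega, by rw [e', e]⟩)
  row_bound l r hr := by
    by_contra hc
    obtain ⟨k, hk, e⟩ := (h.lt_rowLen l r 0).mp (Nat.pos_of_ne_zero hc)
    have := (h.bound hk).2.1
    rw [e] at this
    simp only at this
    omega
  size := by
    have := Finset.card_eq_sum_card_fiberwise (s := Finset.range n)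
      (t := Finset.range ℓ ×ˢ Finset.range n) (f := fun k => ((s k).1, (s k).2.1)) (by
        intro k hk
        have hk : k < n := by simpa using hk
        have hb := h.bound hk
        simp only [Finset.coe_product, Finset.coe_range, Set.mem_prod, Set.mem_Iio]
        exact ⟨hb.1, by omega⟩)
    rw [Finset.card_range, Finset.sum_product] at this
    exact this.symm

theorem IsPath.mem_shape {s : ℕ → Node} (h : IsPath ℓ n s) (A : Node) :
    A ∈ h.shape.diagram ↔ ∃ k < n, s k = A := h.lt_rowLen A.1 A.2.1 A.2.2

/-- The entries of the tableau of a path. -/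
noncomputable def pathEntry (n : ℕ) (s : ℕ → Node) (A : Node) : ℕ :=
  if h : ∃ k, k < n ∧ s k = A then h.choose + 1 else 0

theorem IsPath.entry {s : ℕ → Node} (h : IsPath ℓ n s) {k : ℕ} (hk : k < n) :
    pathEntry n s (s k) = k + 1 := by
  have hx : ∃ j, j < n ∧ s j = s k := ⟨k, hk, rfl⟩
  unfold pathEntry
  rw [dif_pos hx]
  have := hx.choose_spec
  rw [h.inj this.1 hk this.2]

/-- The tableau of a path. -/
noncomputable def IsPath.tab {s : ℕ → Node} (h : IsPath ℓ n s) : StdTableau ℓ n where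
  shape := h.shape
  entry := pathEntry n s
  entry_zero A hA := by
    rw [h.mem_shape] at hA
    exact dif_neg hA
  bijOn := by
    refine ⟨?_, ?_, ?_⟩
    · intro A hA
      obtain ⟨k, hk, rfl⟩ := (h.mem_shape A).mp hA
      rw [h.entry hk]
      exact ⟨by omega, by omega⟩
    · intro A hA B hB e
      obtain ⟨k, hk, rfl⟩ := (h.mem_shape A).mp hA
      obtain ⟨j, hj, rfl⟩ := (h.mem_shape B).mp hB
      rw [h.entry hk, h.entry hj] at e
      rw [Nat.succ.inj e]
    · rintro k ⟨h1, h2⟩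
      refine ⟨s (k - 1), (h.mem_shape _).mpr ⟨k - 1, by omega, rfl⟩, ?_⟩
      rw [h.entry (by omega)]
      omega
  row_inc l r c hA := by
    obtain ⟨k, hk, e⟩ := (h.mem_shape _).mp hA
    obtain ⟨j, hj, e'⟩ := (h k hk).left c (by rw [e])
    rw [← e, h.entry hk, show (l, r, c) = s j by rw [e', e], h.entry (by omega)]
    omega
  col_inc l r c hA := by
    obtain ⟨k, hk, e⟩ := (h.mem_shape _).mp hA
    obtain ⟨j, hj, e'⟩ := (h k hk).up r (by rw [e])
    rw [← e, h.entry hk, show (l, r, c) = s j by rw [e', e], h.entry (by omega)]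
    omega

theorem IsPath.tab_node {s : ℕ → Node} (h : IsPath ℓ n s) {k : ℕ} (hk : k < n) :
    h.tab.node (k + 1) = s k := by
  obtain ⟨h1, h2⟩ := h.tab.node_spec hk
  refine h.tab.bijOn.injOn h1 ((h.mem_shape _).mpr ⟨k, hk, rfl⟩) ?_
  rw [h2]
  exact (h.entry hk).symm

theorem StdTableau.content_mem (κ : ℕ → ℤ) (T : StdTableau ℓ n) {k : ℕ} (hk : k < n) :
    content κ T (k + 1) ∈ contFinset ℓ n κ := by
  obtain ⟨h1, h2, h3⟩ := T.isPath.bound hk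
  unfold contFinset
  refine Finset.mem_filter.mpr ⟨Finset.mem_image.mpr ⟨T.node (k + 1), ?_, rfl⟩,
    T, k + 1, by omega, by omega, rfl⟩
  simp only [Finset.mem_product, Finset.mem_range]
  exact ⟨h1, by omega, by omega⟩

instance StdTableau.finite : Finite (StdTableau ℓ n) := by
  let F : Finset Node := Finset.range ℓ ×ˢ Finset.range n ×ˢ Finset.range n
  refine Finite.of_injective (β := Fin n → F) (fun T k => ⟨T.node (k.1 + 1), ?_⟩) ?_
  · obtain ⟨h1, h2, h3⟩ := T.isPath.bound k.2
    have := k.2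
    simp only [F, Finset.mem_product, Finset.mem_range]
    exact ⟨h1, by omega, by omega⟩
  · intro T T' e
    refine StdTableau.ext_node fun k hk => ?_
    have := congrFun e ⟨k, hk⟩
    exact congrArg Subtype.val this

end tab

/-! ### The cyclotomic Hecke algebra -/

section hecke
variable (K : Type) [Field K] (t : Kˣ) (n ℓ : ℕ) (κ : ℕ → ℤ)

/-- Extension of the Jucys-Murphy generators by zero. -/
noncomputable def LN (k : ℕ) : CycHecke K t n ℓ κ :=
  if h : k < n then Lgen K t n ℓ κ ⟨k, h⟩ else 0

/-- Extension of the braid generators by zero. -/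
noncomputable def TN (r : ℕ) : CycHecke K t n ℓ κ :=
  if h : r < n - 1 then Tgen K t n ℓ κ ⟨r, h⟩ else 0

theorem LN_of {k : ℕ} (h : k < n) : LN K t n ℓ κ k = Lgen K t n ℓ κ ⟨k, h⟩ := dif_pos h

theorem TN_of {r : ℕ} (h : r < n - 1) : TN K t n ℓ κ r = Tgen K t n ℓ κ ⟨r, h⟩ := dif_pos h

theorem aeval_prod_range {K A : Type*} [Field K] [Ring A] [Algebra K A] (a : A) (f : ℕ → K)
    (ℓ : ℕ) :
    Polynomial.aeval a (∏ l ∈ Finset.range ℓ, (Polynomial.X - Polynomial.C (f l))) =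
      ((List.range ℓ).map fun l => a - algebraMap K A (f l)).prod := by
  induction ℓ with
  | zero => simp
  | succ ℓ ih =>
    rw [Finset.prod_range_succ, map_mul, ih, List.range_succ, List.map_append, List.prod_append]
    simp

theorem hecke_HD : HD (t : K) n ℓ κ (LN K t n ℓ κ) (TN K t n ℓ κ) where
  cyc h := by
    have h1 := RingQuot.mkAlgHom_rel K (HeckeRel.cyc (R := K) (t := t) (ℓ := ℓ) (κ := κ) h)
    rw [map_zero, map_list_prod, List.map_map] at h1
    rw [LN_of K t n ℓ κ h, aeval_prod_range, ← h1]
    congr 1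
    refine List.map_congr_left fun l _ => ?_
    rw [Function.comp_apply, map_sub, AlgHom.commutes, qintU_eq]
    rfl
  quad r hr := by
    have h1 := RingQuot.mkAlgHom_rel K
      (HeckeRel.quad (R := K) (t := t) (n := n) (ℓ := ℓ) (κ := κ) ⟨r, by omega⟩)
    rw [map_zero, map_mul, map_add, map_sub, map_one, AlgHom.commutes] at h1
    rw [TN_of K t n ℓ κ (show r < n - 1 by omega)]
    change (Tgen K t n ℓ κ _ + 1) * (Tgen K t n ℓ κ _ - _) = 0 at h1
    generalize Tgen K t n ℓ κ ⟨r, _⟩ = a at h1 ⊢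
    rw [← sub_eq_zero, ← h1]
    have := Algebra.commutes (t : K) a
    rw [add_mul, mul_sub, ← this, sub_mul, one_mul, one_mul]
    abel
  LL j k hj hk := by
    have h1 := RingQuot.mkAlgHom_rel K
      (HeckeRel.LL (R := K) (t := t) (n := n) (ℓ := ℓ) (κ := κ) ⟨j, hj⟩ ⟨k, hk⟩)
    rw [map_mul, map_mul] at h1
    rw [LN_of K t n ℓ κ hj, LN_of K t n ℓ κ hk]
    exact h1
  braid r hr := by
    have h1 := RingQuot.mkAlgHom_rel K
      (HeckeRel.braid (R := K) (t := t) (n := n) (ℓ := ℓ) (κ := κ) ⟨r, by omega⟩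
        ⟨r + 1, by omega⟩ rfl)
    simp only [map_mul] at h1
    rw [TN_of K t n ℓ κ (show r < n - 1 by omega), TN_of K t n ℓ κ (show r + 1 < n - 1 by omega)]
    exact h1
  TL r k hr hk h1 h2 := by
    have h1 := RingQuot.mkAlgHom_rel K
      (HeckeRel.TL (R := K) (t := t) (n := n) (ℓ := ℓ) (κ := κ) ⟨r, by omega⟩
        ⟨k, hk⟩ ⟨h1, h2⟩)
    rw [map_mul, map_mul] at h1
    rw [TN_of K t n ℓ κ (show r < n - 1 by omega), LN_of K t n ℓ κ hk]
    exact h1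
  LT r hr := by
    have h1 := RingQuot.mkAlgHom_rel K
      (HeckeRel.LT (R := K) (t := t) (n := n) (ℓ := ℓ) (κ := κ) ⟨r, by omega⟩)
    rw [map_mul, map_add, map_add, map_mul, map_sub, map_one, AlgHom.commutes] at h1
    rw [TN_of K t n ℓ κ (show r < n - 1 by omega), LN_of K t n ℓ κ (show r < n by omega),
      LN_of K t n ℓ κ hr]
    change Lgen K t n ℓ κ ⟨r + 1, _⟩ * (Tgen K t n ℓ κ _ - _ + 1) =
      Tgen K t n ℓ κ _ * Lgen K t n ℓ κ ⟨r, _⟩ + 1 at h1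
    rw [← h1, sub_mul, Algebra.commutes, mul_add, mul_sub]
    noncomm_ring

variable {K t n ℓ κ}

theorem list_smul {A ι : Type*} [Ring A] [Algebra K A] {v : A} (f : ι → A) (g : ι → K)
    (l : List ι) (h : ∀ a ∈ l, f a * v = g a • v) :
    (l.map f).prod * v = (l.map g).prod • v := by
  induction l with
  | nil => simp
  | cons a l ih =>
    rw [List.map_cons, List.prod_cons, List.map_cons, List.prod_cons, mul_assoc,
      ih fun b hb => h b (List.mem_cons_of_mem _ hb), mul_smul_comm, h a List.mem_cons_self,
      smul_smul, mul_comm]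

theorem factor_smul {A : Type*} [Ring A] [Algebra K A] {v a : A} {y : K} (h : a * v = y • v)
    (c d : K) : (a - algebraMap K A c) * algebraMap K A d * v = ((y - c) * d) • v := by
  rw [mul_assoc, ← Algebra.smul_def, mul_smul_comm, sub_mul, h, ← Algebra.smul_def, ← sub_smul,
    smul_smul, mul_comm]

/-- The scalar by which `F_U` acts on a weight vector. -/
theorem Fidem_mul (U : StdTableau ℓ n) {y : ℕ → K} {v : CycHecke K t n ℓ κ}
    (hv : Eig (LN K t n ℓ κ) n y v) :
    Fidem K t n ℓ κ U * v = ((List.finRange n).map (fun k =>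
      (((contFinset ℓ n κ).sort (· ≤ ·)).map (fun c =>
        if qint (t : K) (content κ U (k.1 + 1)) ≠ qint (t : K) c then
          (y k.1 - qint (t : K) c) * (qint (t : K) (content κ U (k.1 + 1)) - qint (t : K) c)⁻¹
        else 1)).prod)).prod • v := by
  unfold Fidem
  refine list_smul _ _ _ fun k _ => ?_
  refine list_smul _ _ _ fun c _ => ?_
  have h1 := hv k.1 k.2
  rw [LN_of K t n ℓ κ k.2] at h1
  split_ifs
  · exact factor_smul h1 _ _
  · rw [one_mul, one_smul]

theorem Fidem_mul_self (U : StdTableau ℓ n) {v : CycHecke K t n ℓ κ}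
    (hv : Eig (LN K t n ℓ κ) n (qc (t : K) κ fun k => U.node (k + 1)) v) :
    Fidem K t n ℓ κ U * v = v := by
  rw [Fidem_mul U hv]
  convert one_smul K v
  refine List.prod_eq_one fun a ha => ?_
  obtain ⟨k, _, rfl⟩ := List.mem_map.mp ha
  refine List.prod_eq_one fun a ha => ?_
  obtain ⟨c, _, rfl⟩ := List.mem_map.mp ha
  split_ifs with h
  · exact mul_inv_cancel₀ (sub_ne_zero.mpr h)
  · rfl

theorem Fidem_mul_ne (S : Sep (t : K) n ℓ κ) (U V : StdTableau ℓ n) (hUV : U ≠ V)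
    {v : CycHecke K t n ℓ κ}
    (hv : Eig (LN K t n ℓ κ) n (qc (t : K) κ fun k => V.node (k + 1)) v) :
    Fidem K t n ℓ κ U * v = 0 := by
  rw [Fidem_mul U hv]
  have : ∃ k < n, qint (t : K) (content κ U (k + 1)) ≠ qint (t : K) (content κ V (k + 1)) := by
    by_contra hc
    push Not at hc
    exact hUV (StdTableau.ext_node (U.isPath.q_inj S V.isPath le_rfl hc))
  obtain ⟨k, hk, hne⟩ := this
  convert zero_smul K v
  refine List.prod_eq_zero (List.mem_map.mpr ⟨⟨k, hk⟩, List.mem_finRange _, ?_⟩)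
  refine List.prod_eq_zero (List.mem_map.mpr ⟨content κ V (k + 1),
    (Finset.mem_sort _).mpr (V.content_mem κ hk), ?_⟩)
  rw [if_pos hne]
  exact mul_eq_zero_of_left (sub_self _) _

theorem fres_mul (S : Sep (t : K) n ℓ κ) {e : ℕ} (i : Fin n → ZMod e) (V : StdTableau ℓ n)
    {v : CycHecke K t n ℓ κ}
    (hv : Eig (LN K t n ℓ κ) n (qc (t : K) κ fun k => V.node (k + 1)) v) :
    fres K t n ℓ e κ i * v = if resSeq e κ V = i then v else 0 := by
  unfold fres
  have : Fintype {T : StdTableau ℓ n // resSeq e κ T = i} := Fintype.ofFinite _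
  rw [finsum_eq_sum_of_fintype, Finset.sum_mul]
  split_ifs with h
  · rw [Finset.sum_eq_single ⟨V, h⟩]
    · exact Fidem_mul_self V hv
    · intro U _ hU
      exact Fidem_mul_ne S U.1 V (fun hc => hU (Subtype.ext hc)) hv
    · intro hc
      exact absurd (Finset.mem_univ _) hc
  · refine Finset.sum_eq_zero fun U _ => ?_
    exact Fidem_mul_ne S U.1 V (fun hc => h (hc ▸ U.2)) hv

theorem swapSeq_swapSeq {e : ℕ} (i : Fin n → ZMod e) (r : Fin (n - 1)) :
    swapSeq (swapSeq i r) r = i := by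
  have hne : pR r ≠ pL r := by
    intro h
    have := congrArg Fin.val h
    simp [pL, pR] at this
  funext k
  simp only [swapSeq]
  by_cases h1 : k = pL r
  · subst h1; simp [hne]
  · by_cases h2 : k = pR r
    · subst h2; simp [hne]
    · simp [h1, h2]

theorem intertwine_weight (S : Sep (t : K) n ℓ κ) {e : ℕ} (i : Fin n → ZMod e) (r : Fin (n - 1))
    {s : ℕ → Node} (hs : IsPath ℓ n s) {v : CycHecke K t n ℓ κ}
    (hv : Eig (LN K t n ℓ κ) n (qc (t : K) κ s) v) :
    MM (LN K t n ℓ κ) (TN K t n ℓ κ) r.1 * (fres K t n ℓ e κ i * v) =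
      fres K t n ℓ e κ (swapSeq i r) * (MM (LN K t n ℓ κ) (TN K t n ℓ κ) r.1 * v) := by
  have hr : r.1 + 1 < n := by have := r.2; omega
  have H := hecke_HD K t n ℓ κ
  have hM := H.Eig_MM S.ne hr le_rfl hv
  have hV : Eig (LN K t n ℓ κ) n (qc (t : K) κ fun k => hs.tab.node (k + 1)) v :=
    hv.congr fun k hk => by simp only [qc, hs.tab_node hk]
  rw [fres_mul S i hs.tab hV]
  rcases hs.consec hr with ha | ⟨h1, h2⟩
  · have hs' := hs.swap hr ha
    have hV' : Eig (LN K t n ℓ κ) n (qc (t : K) κ fun k => hs'.tab.node (k + 1))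
        (MM (LN K t n ℓ κ) (TN K t n ℓ κ) r.1 * v) :=
      hM.congr fun k hk => by simp only [qc, hs'.tab_node hk]
    rw [fres_mul S _ hs'.tab hV']
    have hres : resSeq e κ hs'.tab = swapSeq (resSeq e κ hs.tab) r := by
      have hc : ∀ k : Fin n, resSeq e κ hs.tab k = ((cont κ (s k.1) : ℤ) : ZMod e) := fun k => by
        rw [← hs.tab_node k.2]; rfl
      have hc' : ∀ k : Fin n, resSeq e κ hs'.tab k =
          ((cont κ (s (Equiv.swap r.1 (r.1 + 1) k.1)) : ℤ) : ZMod e) := fun k => by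
        rw [← hs'.tab_node k.2]; rfl
      funext k
      rw [hc']
      simp only [swapSeq, hc]
      by_cases h1 : k = pL r
      · subst h1
        rw [if_pos rfl]
        simp only [pL, pR, Equiv.swap_apply_left]
      · rw [if_neg h1]
        by_cases h2 : k = pR r
        · subst h2
          rw [if_pos rfl]
          simp only [pL, pR, Equiv.swap_apply_right]
        · rw [if_neg h2, Equiv.swap_apply_of_ne_of_ne]
          · exact fun h => h1 (Fin.ext h)
          · exact fun h => h2 (Fin.ext h)
    by_cases hi : resSeq e κ hs.tab = i
    · rw [if_pos hi, if_pos (by rw [hres, hi])]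
    · rw [if_neg hi, if_neg, mul_zero]
      intro hc
      rw [hres] at hc
      apply hi
      rw [← swapSeq_swapSeq (resSeq e κ hs.tab) r, hc, swapSeq_swapSeq]
  · have h0 : MM (LN K t n ℓ κ) (TN K t n ℓ κ) r.1 * v = 0 := by
      rcases h2 with h2 | h2
      · exact nonstd S (branch_all S H) le_rfl hr hs (Or.inl rfl) h1 h2 hM
      · exact nonstd S (branch_all S H) le_rfl hr hs (Or.inr rfl) h1 h2 hM
    rw [h0, mul_zero]
    split_ifs
    · exact h0
    · exact mul_zero _

theorem intertwine_all (S : Sep (t : K) n ℓ κ) {e : ℕ} (i : Fin n → ZMod e) (r : Fin (n - 1)) :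
    MM (LN K t n ℓ κ) (TN K t n ℓ κ) r.1 * fres K t n ℓ e κ i =
      fres K t n ℓ e κ (swapSeq i r) * MM (LN K t n ℓ κ) (TN K t n ℓ κ) r.1 := by
  have h := span_paths S (hecke_HD K t n ℓ κ) n le_rfl 1
  have key : ∀ w ∈ Submodule.span K {w : CycHecke K t n ℓ κ | ∃ s, IsPath ℓ n s ∧
      Eig (LN K t n ℓ κ) n (qc (t : K) κ s) w},
      MM (LN K t n ℓ κ) (TN K t n ℓ κ) r.1 * (fres K t n ℓ e κ i * w) =
      fres K t n ℓ e κ (swapSeq i r) * (MM (LN K t n ℓ κ) (TN K t n ℓ κ) r.1 * w) := by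
    intro w hw
    induction hw using Submodule.span_induction with
    | mem w hw =>
      obtain ⟨s, hs, hv⟩ := hw
      exact intertwine_weight S i r hs hv
    | zero => simp only [mul_zero]
    | add a b _ _ ha hb => simp only [mul_add, ha, hb]
    | smul c a _ ha => simp only [mul_smul_comm, ha]
  have h1 := key 1 h
  rwa [mul_one, mul_one] at h1

end hecke
/-- Lemma L:InterwinderNe: if `i_r ≠ i_{r+1}` then
`(T_r L_r - L_r T_r) f_i = f_{s_r·i} (T_r L_r - L_r T_r)`. -/
theorem intertwiner_distinct_residues (n ℓ e : ℕ) (he : e ≠ 1) (κ : ℕ → ℤ)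
    (K : Type) [Field K] (t : Kˣ) (hsep : SeparatesF t n ℓ κ)
    (i : Fin n → ZMod e) (r : Fin (n - 1)) (h : i (pL r) ≠ i (pR r)) :
    (Tgen K t n ℓ κ r * Lgen K t n ℓ κ (pL r) -
        Lgen K t n ℓ κ (pL r) * Tgen K t n ℓ κ r) * fres K t n ℓ e κ i =
      fres K t n ℓ e κ (swapSeq i r) *
        (Tgen K t n ℓ κ r * Lgen K t n ℓ κ (pL r) -
          Lgen K t n ℓ κ (pL r) * Tgen K t n ℓ κ r) := by
  have h1 := intertwine_all hsep.sep i r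
  unfold MM at h1
  rw [TN_of K t n ℓ κ r.2, LN_of K t n ℓ κ (show r.1 < n from (pL r).2)] at h1
  exact h1

end Paper
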